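/- Let n ≥ 3. Suppose u ∈ C²(𝔹ⁿ,ℝⁿ) ∩ C(cl 𝔹ⁿ,ℝⁿ), ψ ∈ L^∞(𝔹ⁿ,ℝⁿ) and φ ∈ L^∞(𝕊ⁿ⁻¹,ℝⁿ) satisfy Δ_h u(x) = ψ(x) for all x ∈ 𝔹ⁿ, u(ξ) = φ(ξ) for all ξ ∈ 𝕊ⁿ⁻¹, and ∫_{𝔹ⁿ} (1−|x|²)^{n−1} |ψ(x)| dτ(x) < ∞. Then u(x) = P_h[φ](x) − G_h[ψ](x) for every x ∈ 𝔹ⁿ. -/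

import Mathlib

open MeasureTheory Metric Set

noncomputable section

/-- The open unit ball setting: Euclidean n-space. -/
abbrev En (n : ℕ) := EuclideanSpace ℝ (Fin n)

/-- Lebesgue volume measure normalized so that the unit ball has measure 1. -/
def nuMeasure (n : ℕ) : Measure (En n) :=
  (volume (ball (0 : En n) 1))⁻¹ • (volume : Measure (En n))

/-- The Möbius invariant measure `dτ(x) = dν(x)/(1-|x|²)ⁿ`. -/
def tauMeasure (n : ℕ) : Measure (En n) :=
  (nuMeasure n).withDensity fun x => ENNReal.ofReal ((1 - ‖x‖ ^ 2) ^ n)⁻¹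

/-- The surface measure on the unit sphere, normalized so that the sphere has measure 1. -/
def sigmaMeasure (n : ℕ) : Measure (sphere (0 : En n) 1) :=
  ((volume : Measure (En n)).toSphere univ)⁻¹ • (volume : Measure (En n)).toSphere

/-- `[a,x]` via the identity `[a,x]² = |x-a|² + (1-|x|²)(1-|a|²)`. -/
def qbracket {n : ℕ} (a x : En n) : ℝ :=
  Real.sqrt (‖x - a‖ ^ 2 + (1 - ‖x‖ ^ 2) * (1 - ‖a‖ ^ 2))

/-- The Möbius transformation `φ_a` of the unit ball with `φ_a(a) = 0`, `φ_a(0) = a`. -/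
def mobius {n : ℕ} (a x : En n) : En n :=
  (qbracket a x ^ 2)⁻¹ • (‖x - a‖ ^ 2 • a - (1 - ‖a‖ ^ 2) • (x - a))

/-- `g(r) = (1/n) ∫_r^1 (1-s²)^{n-2} s^{-(n-1)} ds`. -/
def gfun (n : ℕ) (r : ℝ) : ℝ :=
  (1 / (n : ℝ)) * ∫ s in r..(1 : ℝ), (1 - s ^ 2) ^ (n - 2) / s ^ (n - 1)

/-- The hyperbolic Green function `G_h(x,y) = g(|φ_x(y)|)`. -/
def Gh (n : ℕ) (x y : En n) : ℝ := gfun n ‖mobius x y‖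

/-- The Green integral `G_h[ψ](x) = ∫_{𝔹ⁿ} G_h(x,y) ψ(y) dτ(y)`. -/
def GhInt (n : ℕ) (ψ : En n → En n) (x : En n) : En n :=
  ∫ y in ball (0 : En n) 1, Gh n x y • ψ y ∂(tauMeasure n)

/-- The Poisson–Szegő kernel `P_h(x,ξ) = ((1-|x|²)/|ξ-x|²)^{n-1}`. -/
def Ph (n : ℕ) (x : En n) (ξ : sphere (0 : En n) 1) : ℝ :=
  ((1 - ‖x‖ ^ 2) / ‖(ξ : En n) - x‖ ^ 2) ^ (n - 1)

/-- The Poisson integral `P_h[φ](x) = ∫_{𝕊ⁿ⁻¹} P_h(x,ξ) φ(ξ) dσ(ξ)`. -/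
def PhInt (n : ℕ) (φ : En n → En n) (x : En n) : En n :=
  ∫ ξ, Ph n x ξ • φ (ξ : En n) ∂(sigmaMeasure n)

/-- The `i`-th standard basis vector. -/
def basisE (n : ℕ) (i : Fin n) : En n := EuclideanSpace.single i 1

/-- The Euclidean Laplacian of a vector-valued function. -/
def lap {n : ℕ} (u : En n → En n) (x : En n) : En n :=
  ∑ i : Fin n, fderiv ℝ (fun y => fderiv ℝ u y (basisE n i)) x (basisE n i)

/-- The hyperbolic Laplacian
`Δ_h u(x) = (1-|x|²)² Δu(x) + 2(n-2)(1-|x|²) Σᵢ xᵢ ∂u/∂xᵢ(x)`. -/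
def hypLap (n : ℕ) (u : En n → En n) (x : En n) : En n :=
  (1 - ‖x‖ ^ 2) ^ 2 • lap u x
    + (2 * ((n : ℝ) - 2) * (1 - ‖x‖ ^ 2)) • ∑ i : Fin n, x i • fderiv ℝ u x (basisE n i)

/-- Pochhammer symbol `(a)_k`. -/
def poch (a : ℝ) (k : ℕ) : ℝ := (ascPochhammer ℝ k).eval a

/-- Gauss hypergeometric series `F(a,b;c;s)`. -/
def hyperF (a b c s : ℝ) : ℝ :=
  ∑' k : ℕ, poch a k * poch b k / ((k.factorial : ℝ) * poch c k) * s ^ k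

/-- A majorant: continuous, increasing, `ω(0)=0`, with `ω(t)/t` non-increasing. -/
def IsMajorant (ω : ℝ → ℝ) : Prop :=
  ContinuousOn ω (Ici 0) ∧ MonotoneOn ω (Ici 0) ∧ ω 0 = 0 ∧
    (∀ x ∈ Ici (0:ℝ), 0 ≤ ω x) ∧
    ∀ s t : ℝ, 0 < s → s ≤ t → ω t / t ≤ ω s / s

/-- A fast majorant: `∫₀^ρ ω(t)/t dt ≤ C ω(ρ)` for small `ρ`. -/
def IsFastMajorant (ω : ℝ → ℝ) : Prop :=
  IsMajorant ω ∧ ∃ ρ₀ > (0:ℝ), ∃ C : ℝ,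
    ∀ ρ : ℝ, 0 < ρ → ρ < ρ₀ → (∫ t in (0:ℝ)..ρ, ω t / t) ≤ C * ω ρ

end

/-!
Fix `a` in the ball. In divergence form `Δ_h u = (1-|y|²)ⁿ div((1-|y|²)^{2-n} ∇u)`, so the formula
is Green's second identity with the hyperbolic Green function of pole `a`, and the only analytic
issues are the pole of the Green function and the lack of regularity of `u` at the sphere.

Both are avoided by replacing the Green function. Put `s = 1 - |φ_a(y)|²`. As a function of `s`, the
Green function has derivative `s^{n-2} (1-s)^{-n/2} / (2n)`. The function `Hh ε` is the primitive,
vanishing at `0`, of `θ(s/ε - 1) s^{n-2} (|1-s| + ε)^{-n/2} / (2n)`, where `θ` is a smooth step. The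
shift by `ε` removes the pole, and the cutoff makes `y ↦ Hh ε (sq a y)` compactly supported in the
ball. The vector field of Green's second identity then extends by zero to a compactly supported `C¹`
field on the whole space, whose divergence has integral zero (`green_identity`).

The weighted Laplacian of the regularised Green function is explicit (`divB`) and splits into two
parts (`green_split`).

* Where the cutoff is differentiated there is a boundary layer of width comparable to `ε`. In polar
  coordinates, with `ρ = (1-r)/ε`, the integral of `u` against it converges by dominated convergence
  to `1/n` times the integral over the sphere of `u` against the Poisson–Szegő kernel
  (`tendsto_boundary`). Only the continuity of `u` up to the sphere is used, because the cutoff is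
  applied to the derivative in `s`, so that no derivative of `u` meets the boundary layer.
* The remaining part is an approximate Dirac mass at `a` (`tendsto_interior`).

The integrals of `Hh ε` against `Δ_h u = ψ` converge to the Green integral by dominated convergence
(`tendsto_green`): near the sphere `Hh ε` is at most a multiple of `(1-|y|²)^{n-1}`, which is where
the integrability hypothesis enters, and near `a` it is at most a multiple of `|y-a|^{2-n}`, where
the boundedness of `ψ` suffices.
-/

namespace HypGreen
open Filter Topology
open scoped RealInnerProductSpace

variable {n : ℕ}

noncomputable section

/-! ### Kernels and the regularised Green function -/

/-- The polynomial `[a,y]² = 1 - 2⟨a,y⟩ + |a|²|y|²`. -/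
def Dq (a y : En n) : ℝ := 1 - 2 * ⟪a, y⟫ + ‖a‖ ^ 2 * ‖y‖ ^ 2

/-- `sq a y = 1 - |φ_a(y)|²`. -/
def sq (a y : En n) : ℝ := (1 - ‖a‖ ^ 2) * (1 - ‖y‖ ^ 2) / Dq a y

/-- The regularised product `[a,y]² (|y-a|² + ε [a,y]²)`, equal to `[a,y]⁴ (|φ_a(y)|² + ε)`. -/
def Rq (ε : ℝ) (a y : En n) : ℝ := Dq a y * (‖y - a‖ ^ 2 + ε * Dq a y)

/-- The direction of `∇ sq a`, cleared of denominators. -/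
def Vf (a y : En n) : En n := (1 - ‖y‖ ^ 2) • a - (1 - 2 * ⟪a, y⟫ + ‖a‖ ^ 2) • y

/-- The cutoff `θ_ε(s)`: it vanishes for `s ≤ ε` and equals one for `s ≥ 2ε`. -/
def cut (ε s : ℝ) : ℝ := Real.smoothTransition (s / ε - 1)

/-- The derivative of the regularised Green function as a function of `s = 1 - |φ_a(y)|²`. -/
def kern (n : ℕ) (ε s : ℝ) : ℝ :=
  1 / (2 * n) * cut ε s * s ^ (n - 2) * (|1 - s| + ε) ^ (-(n : ℝ) / 2)

/-- The regularised and truncated Green function in the variable `s = 1 - |φ_a(y)|²`. -/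
def Hh (n : ℕ) (ε s : ℝ) : ℝ := ∫ x in (0 : ℝ)..s, kern n ε x

/-- The scalar factor of the weighted gradient `(1-|y|²)^{2-n} ∇(Hh ε (sq a y)) = Bs • Vf`. -/
def Bs (n : ℕ) (ε : ℝ) (a y : En n) : ℝ :=
  (1 - ‖a‖ ^ 2) ^ (n - 1) / n * cut ε (sq a y) * (Rq ε a y) ^ (-(n : ℝ) / 2)

/-- The divergence of `Bs • Vf`. The first summand lives near the sphere, the second is an
approximation of minus the Dirac mass at `a`. -/
def divB (n : ℕ) (ε : ℝ) (a y : En n) : ℝ :=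
  2 * (1 - ‖a‖ ^ 2) ^ n / n * (deriv Real.smoothTransition (sq a y / ε - 1) / ε)
      * (‖y - a‖ ^ 2 / Dq a y) * (Rq ε a y) ^ (-(n : ℝ) / 2)
  - ε * (1 - ‖a‖ ^ 2) ^ n * cut ε (sq a y) * Dq a y ^ 2 * (Rq ε a y) ^ (-(n : ℝ) / 2 - 1)

lemma norm_sub_sq' (a y : En n) : ‖y - a‖ ^ 2 = ‖y‖ ^ 2 - 2 * ⟪a, y⟫ + ‖a‖ ^ 2 := by
  rw [norm_sub_sq_real, real_inner_comm]

lemma Dq_eq (a y : En n) : Dq a y = ‖y - a‖ ^ 2 + (1 - ‖y‖ ^ 2) * (1 - ‖a‖ ^ 2) := by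
  rw [norm_sub_sq', Dq]; ring

lemma Dq_lower (a y : En n) : (1 - ‖a‖ * ‖y‖) ^ 2 ≤ Dq a y := by
  have := real_inner_le_norm a y
  rw [Dq]; nlinarith

lemma Dq_nonneg (a y : En n) : 0 ≤ Dq a y := (sq_nonneg _).trans (Dq_lower a y)

lemma Dq_lower' {a y : En n} (ha : ‖a‖ < 1) (hy : ‖y‖ ≤ 1) : (1 - ‖a‖) ^ 2 ≤ Dq a y := by
  refine le_trans ?_ (Dq_lower a y)
  have := norm_nonneg a
  have := norm_nonneg y
  have : ‖a‖ * ‖y‖ ≤ ‖a‖ := by nlinarith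
  gcongr

lemma Dq_pos {a y : En n} (ha : ‖a‖ < 1) (hy : ‖y‖ ≤ 1) : 0 < Dq a y :=
  lt_of_lt_of_le (by have : 0 < 1 - ‖a‖ := by linarith
                     positivity) (Dq_lower' ha hy)

lemma Dq_le {a y : En n} (ha : ‖a‖ < 1) (hy : ‖y‖ ≤ 1) : Dq a y ≤ 4 := by
  have h1 := abs_real_inner_le_norm a y
  have := norm_nonneg a
  have := norm_nonneg y
  have h2 : ‖a‖ * ‖y‖ ≤ 1 := by nlinarith
  have := (abs_le.1 (h1.trans h2)).1
  rw [Dq]; nlinarith [mul_nonneg (norm_nonneg a) (norm_nonneg y)]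

/-- The identity `1 - |φ_a(y)|² = (1-|a|²)(1-|y|²)/[a,y]²`. -/
lemma one_sub_sq {a y : En n} (hD : Dq a y ≠ 0) : 1 - sq a y = ‖y - a‖ ^ 2 / Dq a y := by
  rw [sq, eq_div_iff hD, sub_mul, div_mul_cancel₀ _ hD, Dq_eq]; ring

lemma sq_pos {a y : En n} (ha : ‖a‖ < 1) (hy : ‖y‖ < 1) : 0 < sq a y := by
  have h1 : 0 < 1 - ‖a‖ ^ 2 := by nlinarith [norm_nonneg a]
  have h2 : 0 < 1 - ‖y‖ ^ 2 := by nlinarith [norm_nonneg y]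
  exact div_pos (mul_pos h1 h2) (Dq_pos ha hy.le)

lemma sq_le_one {a y : En n} (ha : ‖a‖ < 1) (hy : ‖y‖ ≤ 1) : sq a y ≤ 1 := by
  have h := Dq_pos ha hy
  have := one_sub_sq h.ne'
  have : 0 ≤ ‖y - a‖ ^ 2 / Dq a y := by positivity
  linarith

lemma sq_lt_one {a y : En n} (ha : ‖a‖ < 1) (hy : ‖y‖ ≤ 1) (hne : y ≠ a) : sq a y < 1 := by
  have h := Dq_pos ha hy
  have := one_sub_sq h.ne'
  have h3 : 0 < ‖y - a‖ := norm_pos_iff.2 (sub_ne_zero.2 hne)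
  have : 0 < ‖y - a‖ ^ 2 / Dq a y := by positivity
  linarith

/-- The sublevel set `sq a ≤ ε` contains a neighbourhood of the sphere and the exterior of the ball,
so the cutoff `cut ε (sq a y)` has compact support in the ball. -/
lemma sq_le_of_le {a : En n} (ha : ‖a‖ < 1) {ε : ℝ} (hε : 0 < ε) {y : En n}
    (hy : 1 - ‖y‖ ^ 2 ≤ ε * (1 - ‖a‖) ^ 2) : sq a y ≤ ε := by
  have ha0 := norm_nonneg a
  have h1 : 0 < 1 - ‖a‖ ^ 2 := by nlinarith
  rcases le_or_gt 1 ‖y‖ with h | h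
  · refine le_trans ?_ hε.le
    refine div_nonpos_of_nonpos_of_nonneg ?_ (Dq_nonneg a y)
    exact mul_nonpos_of_nonneg_of_nonpos h1.le (by nlinarith)
  · rw [sq, div_le_iff₀ (Dq_pos ha h.le)]
    have h2 : 0 < 1 - ‖y‖ ^ 2 := by nlinarith [norm_nonneg y]
    calc (1 - ‖a‖ ^ 2) * (1 - ‖y‖ ^ 2) ≤ 1 * (1 - ‖y‖ ^ 2) := by gcongr; nlinarith
      _ ≤ ε * (1 - ‖a‖) ^ 2 := by linarith
      _ ≤ _ := by gcongr; exact Dq_lower' ha h.le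

lemma Rq_pos {a y : En n} (ha : ‖a‖ < 1) (hy : ‖y‖ ≤ 1) {ε : ℝ} (hε : 0 < ε) : 0 < Rq ε a y := by
  have := Dq_pos ha hy
  unfold Rq; positivity

lemma cut_nonneg (ε s : ℝ) : 0 ≤ cut ε s := Real.smoothTransition.nonneg _
lemma cut_le_one (ε s : ℝ) : cut ε s ≤ 1 := Real.smoothTransition.le_one _
lemma cut_zero {ε s : ℝ} (hε : 0 < ε) (h : s ≤ ε) : cut ε s = 0 := by
  apply Real.smoothTransition.zero_of_nonpos
  have : s / ε ≤ 1 := (div_le_one hε).2 h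
  linarith
lemma cut_one {ε s : ℝ} (hε : 0 < ε) (h : 2 * ε ≤ s) : cut ε s = 1 := by
  apply Real.smoothTransition.one_of_one_le
  have : 2 ≤ s / ε := (le_div_iff₀ hε).2 h
  linarith

lemma continuous_cut (ε : ℝ) : Continuous (cut ε) := by
  unfold cut
  exact Real.smoothTransition.continuous.comp (by fun_prop)

lemma continuous_kern (n : ℕ) {ε : ℝ} (hε : 0 < ε) : Continuous (kern n ε) := by
  have h1 := continuous_cut ε
  have h2 : Continuous fun s : ℝ => (|1 - s| + ε) ^ (-(n : ℝ) / 2) :=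
    Continuous.rpow_const (by fun_prop) (fun x => Or.inl (by positivity))
  unfold kern
  fun_prop

lemma hasDerivAt_Hh (n : ℕ) {ε : ℝ} (hε : 0 < ε) (s : ℝ) :
    HasDerivAt (Hh n ε) (kern n ε s) s :=
  (continuous_kern n hε).integral_hasStrictDerivAt 0 s |>.hasDerivAt

lemma contDiff_Hh (n : ℕ) {ε : ℝ} (hε : 0 < ε) : ContDiff ℝ 1 (Hh n ε) := by
  rw [contDiff_one_iff_deriv]
  refine ⟨fun s => (hasDerivAt_Hh n hε s).differentiableAt, ?_⟩
  have : deriv (Hh n ε) = kern n ε := funext fun s => (hasDerivAt_Hh n hε s).deriv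
  rw [this]; exact continuous_kern n hε

lemma Hh_zero (n : ℕ) {ε s : ℝ} (hε : 0 < ε) (h : s ≤ ε) : Hh n ε s = 0 := by
  unfold Hh
  rw [intervalIntegral.integral_congr (g := fun _ => (0 : ℝ))]
  · simp
  · intro x hx
    have : x ≤ ε := (mem_uIcc.1 hx).elim (fun h' => h'.2.trans h) (fun h' => h'.2.trans hε.le)
    simp [kern, cut_zero hε this]

lemma kern_nonneg (n : ℕ) {ε s : ℝ} (hε : 0 < ε) (hs : 0 ≤ s) : 0 ≤ kern n ε s := by
  have := cut_nonneg ε s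
  unfold kern; positivity

lemma Hh_nonneg (n : ℕ) {ε s : ℝ} (hε : 0 < ε) (hs : 0 ≤ s) : 0 ≤ Hh n ε s :=
  intervalIntegral.integral_nonneg hs fun _ hx => kern_nonneg n hε hx.1

lemma hasFDerivAt_normsq (y : En n) :
    HasFDerivAt (fun y : En n => ‖y‖ ^ 2) ((2 : ℝ) • innerSL ℝ y) y := by
  have := (hasStrictFDerivAt_norm_sq y).hasFDerivAt
  rwa [← Nat.cast_smul_eq_nsmul ℝ, Nat.cast_ofNat] at this

lemma hasFDerivAt_inner (a y : En n) :
    HasFDerivAt (fun y : En n => ⟪a, y⟫) (innerSL ℝ a) y := (innerSL ℝ a).hasFDerivAt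

lemma hasFDerivAt_q (y : En n) :
    HasFDerivAt (fun y : En n => 1 - ‖y‖ ^ 2) (-((2 : ℝ) • innerSL ℝ y)) y :=
  (hasFDerivAt_normsq y).const_sub 1

lemma hasFDerivAt_N (a y : En n) :
    HasFDerivAt (fun y : En n => ‖y - a‖ ^ 2) ((2 : ℝ) • innerSL ℝ (y - a)) y := by
  have := (hasFDerivAt_normsq (y - a)).comp y ((hasFDerivAt_id y).sub_const a)
  simpa [Function.comp_def] using this

lemma hasFDerivAt_Dq (a y : En n) :
    HasFDerivAt (Dq a) (-((2 : ℝ) • innerSL ℝ a) + (‖a‖ ^ 2) • ((2 : ℝ) • innerSL ℝ y)) y :=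
  (((hasFDerivAt_inner a y).const_mul 2).const_sub 1).add ((hasFDerivAt_normsq y).const_mul _)

lemma hasFDerivAt_sq (a y : En n) (hD : Dq a y ≠ 0) :
    HasFDerivAt (sq a) ((2 * (1 - ‖a‖ ^ 2) / Dq a y ^ 2) • innerSL ℝ (Vf a y)) y := by
  have := (((hasFDerivAt_q y).const_mul (1 - ‖a‖ ^ 2)).mul
    (((hasDerivAt_inv hD).comp_hasFDerivAt y (hasFDerivAt_Dq a y))))
  have h2 : sq a = (fun y : En n => (1 - ‖a‖ ^ 2) * (1 - ‖y‖ ^ 2)) * (fun y => y⁻¹) ∘ Dq a := by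
    funext z; simp [sq, div_eq_mul_inv]
  rw [h2]
  refine this.congr_fderiv (ContinuousLinearMap.ext fun v => ?_)
  simp only [_root_.smul_apply, _root_.add_apply,
    _root_.neg_apply, innerSL_apply_apply, smul_eq_mul, Vf, inner_sub_left,
    real_inner_smul_left, Function.comp]
  field_simp
  simp only [Dq]
  ring

/-! ### The divergence of the weighted gradient -/

lemma hasFDerivAt_Rq (ε : ℝ) (a y : En n) :
    HasFDerivAt (Rq ε a)
      (Dq a y • ((2 : ℝ) • innerSL ℝ (y - a)
          + ε • (-((2 : ℝ) • innerSL ℝ a) + (‖a‖ ^ 2) • ((2 : ℝ) • innerSL ℝ y)))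
        + (‖y - a‖ ^ 2 + ε * Dq a y) •
          (-((2 : ℝ) • innerSL ℝ a) + (‖a‖ ^ 2) • ((2 : ℝ) • innerSL ℝ y))) y :=
  (hasFDerivAt_Dq a y).mul ((hasFDerivAt_N a y).add ((hasFDerivAt_Dq a y).const_mul ε))

lemma contDiff_Dq (a : En n) {m : WithTop ℕ∞} : ContDiff ℝ m (Dq a) := by
  have h1 : ContDiff ℝ m fun y : En n => ‖y‖ ^ 2 := contDiff_norm_sq ℝ
  have h2 : ContDiff ℝ m fun y : En n => ⟪a, y⟫ := (innerSL ℝ a).contDiff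
  unfold Dq
  fun_prop

lemma contDiff_Rq (ε : ℝ) (a : En n) {m : WithTop ℕ∞} : ContDiff ℝ m (Rq ε a) := by
  have h1 : ContDiff ℝ m fun y : En n => ‖y - a‖ ^ 2 :=
    (contDiff_norm_sq ℝ).comp (contDiff_id.sub contDiff_const)
  have h2 := contDiff_Dq a (m := m)
  unfold Rq
  fun_prop

lemma contDiff_Vf (a : En n) {m : WithTop ℕ∞} : ContDiff ℝ m (Vf a) := by
  have h1 : ContDiff ℝ m fun y : En n => ‖y‖ ^ 2 := contDiff_norm_sq ℝ
  have h2 : ContDiff ℝ m fun y : En n => ⟪a, y⟫ := (innerSL ℝ a).contDiff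
  unfold Vf
  fun_prop

lemma contDiffAt_sq {a y : En n} (ha : ‖a‖ < 1) (hy : ‖y‖ ≤ 1) {m : WithTop ℕ∞} :
    ContDiffAt ℝ m (sq a) y := by
  have h1 : ContDiff ℝ m fun y : En n => ‖y‖ ^ 2 := contDiff_norm_sq ℝ
  have h2 := contDiff_Dq a (m := m)
  unfold sq
  exact ContDiffAt.div (contDiffAt_const.mul (contDiffAt_const.sub h1.contDiffAt)) h2.contDiffAt (Dq_pos ha hy).ne'

lemma contDiff_cut (ε : ℝ) {m : ℕ∞} : ContDiff ℝ m (cut ε) := by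
  unfold cut
  exact Real.smoothTransition.contDiff.comp (by fun_prop)

lemma hasDerivAt_cut (ε s : ℝ) :
    HasDerivAt (cut ε) (deriv Real.smoothTransition (s / ε - 1) / ε) s := by
  have h1 : HasDerivAt Real.smoothTransition (deriv Real.smoothTransition (s / ε - 1))
      (s / ε - 1) :=
    ((Real.smoothTransition.contDiffAt (n := 1)).differentiableAt (by norm_num)).hasDerivAt
  have h2 : HasDerivAt (fun s : ℝ => s / ε - 1) (1 / ε) s :=
    ((hasDerivAt_id s).div_const ε).sub_const 1
  have := h1.comp s h2
  rw [mul_one_div] at this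
  exact this

lemma contDiffAt_Bs {a y : En n} (ha : ‖a‖ < 1) (hy : ‖y‖ ≤ 1) {ε : ℝ} (hε : 0 < ε) :
    ContDiffAt ℝ 1 (Bs n ε a) y := by
  have h1 : ContDiffAt ℝ 1 (fun y => cut ε (sq a y)) y :=
    (contDiff_cut ε (m := 1)).contDiffAt.comp y (contDiffAt_sq ha hy)
  have h2 : ContDiffAt ℝ 1 (fun y => (Rq ε a y) ^ (-(n : ℝ) / 2)) y :=
    (contDiff_Rq ε a).contDiffAt.rpow_const_of_ne (Rq_pos ha hy hε).ne'
  unfold Bs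
  fun_prop

/-- The divergence of the field `Bs • Vf` is `divB`: the derivative of `Bs` along `Vf`, plus `Bs` times
`div Vf = -n (1 - 2⟨a,y⟩ + |a|²)`. -/
lemma exists_fderiv_Bs (hn : 3 ≤ n) {a y : En n} (ha : ‖a‖ < 1) (hy : ‖y‖ ≤ 1) {ε : ℝ}
    (hε : 0 < ε) :
    ∃ f' : En n →L[ℝ] ℝ, HasFDerivAt (Bs n ε a) f' y ∧
      f' (Vf a y) - n * (1 - 2 * ⟪a, y⟫ + ‖a‖ ^ 2) * Bs n ε a y = divB n ε a y := by
  have hD := Dq_pos ha hy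
  have hR := Rq_pos ha hy hε
  have hs := hasFDerivAt_sq a y hD.ne'
  have hc := (hasDerivAt_cut ε (sq a y)).comp_hasFDerivAt y hs
  have hr := (Real.hasDerivAt_rpow_const (p := -(n : ℝ) / 2)
    (Or.inl hR.ne')).comp_hasFDerivAt y (hasFDerivAt_Rq ε a y)
  have := (hc.const_mul ((1 - ‖a‖ ^ 2) ^ (n - 1) / n)).mul hr
  refine ⟨_, this, ?_⟩
  have hpow : (1 - ‖a‖ ^ 2) ^ n = (1 - ‖a‖ ^ 2) ^ (n - 1) * (1 - ‖a‖ ^ 2) := by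
    rw [← pow_succ]; congr 1; omega
  have hRr : (Rq ε a y) ^ (-(n : ℝ) / 2) = Rq ε a y * (Rq ε a y) ^ (-(n : ℝ) / 2 - 1) := by
    rw [Real.rpow_sub_one hR.ne']; field_simp
  have hn0 : (n : ℝ) ≠ 0 := by positivity
  have hYA : ‖y - a‖ ^ 2 = ‖y‖ ^ 2 - 2 * ⟪a, y⟫ + ‖a‖ ^ 2 := norm_sub_sq' a y
  have hVV : ⟪Vf a y, Vf a y⟫ = ‖y - a‖ ^ 2 * Dq a y := by
    rw [hYA]
    simp only [Vf, Dq, inner_sub_left, inner_sub_right, real_inner_smul_left,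
      real_inner_smul_right, real_inner_self_eq_norm_sq, real_inner_comm a y, norm_smul,
      mul_pow, Real.norm_eq_abs, sq_abs]
    ring
  have hVa : ⟪a, Vf a y⟫ = (1 - ‖y‖ ^ 2) * ‖a‖ ^ 2
      - (1 - 2 * ⟪a, y⟫ + ‖a‖ ^ 2) * ⟪a, y⟫ := by
    simp only [Vf, inner_sub_right, real_inner_smul_right, real_inner_self_eq_norm_sq]
  have hVy : ⟪y, Vf a y⟫ = (1 - ‖y‖ ^ 2) * ⟪a, y⟫
      - (1 - 2 * ⟪a, y⟫ + ‖a‖ ^ 2) * ‖y‖ ^ 2 := by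
    simp only [Vf, inner_sub_right, real_inner_smul_right, real_inner_self_eq_norm_sq,
      real_inner_comm a y]
  simp only [_root_.add_apply, _root_.smul_apply, _root_.neg_apply, innerSL_apply_apply,
    smul_eq_mul, Function.comp, inner_sub_left, hVV, hVa, hVy, divB, Bs, hpow, hRr]
  set W := (Rq ε a y) ^ (-(n : ℝ) / 2 - 1)
  set C := (1 - ‖a‖ ^ 2) ^ (n - 1)
  set T := deriv Real.smoothTransition (sq a y / ε - 1)
  set K := cut ε (sq a y)
  rw [hYA]
  -- the terms carrying the undifferentiated cutoff collapse to a multiple of `ε`, since the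
  -- unregularised Green function is hyperbolic harmonic away from its pole
  have key : (1 / 2 : ℝ) * (Dq a y * (2 * ((1 - ‖y‖ ^ 2) * ⟪a, y⟫
      - (1 - 2 * ⟪a, y⟫ + ‖a‖ ^ 2) * ‖y‖ ^ 2 - ((1 - ‖y‖ ^ 2) * ‖a‖ ^ 2
      - (1 - 2 * ⟪a, y⟫ + ‖a‖ ^ 2) * ⟪a, y⟫)) + ε * (-(2 * ((1 - ‖y‖ ^ 2) * ‖a‖ ^ 2
      - (1 - 2 * ⟪a, y⟫ + ‖a‖ ^ 2) * ⟪a, y⟫)) + ‖a‖ ^ 2 * (2 * ((1 - ‖y‖ ^ 2) * ⟪a, y⟫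
      - (1 - 2 * ⟪a, y⟫ + ‖a‖ ^ 2) * ‖y‖ ^ 2)))) + (‖y‖ ^ 2 - 2 * ⟪a, y⟫ + ‖a‖ ^ 2 + ε * Dq a y) *
      (-(2 * ((1 - ‖y‖ ^ 2) * ‖a‖ ^ 2
      - (1 - 2 * ⟪a, y⟫ + ‖a‖ ^ 2) * ⟪a, y⟫)) + ‖a‖ ^ 2 * (2 * ((1 - ‖y‖ ^ 2) * ⟪a, y⟫
      - (1 - 2 * ⟪a, y⟫ + ‖a‖ ^ 2) * ‖y‖ ^ 2))))
      + (1 - 2 * ⟪a, y⟫ + ‖a‖ ^ 2) * Rq ε a y = ε * (1 - ‖a‖ ^ 2) * Dq a y ^ 2 := by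
    rw [Rq, hYA]; simp only [Dq]; ring
  have e1 : (n : ℝ) * (n : ℝ)⁻¹ = 1 := mul_inv_cancel₀ hn0
  have e2 : Dq a y * (Dq a y)⁻¹ = 1 := mul_inv_cancel₀ hD.ne'
  simp only [div_eq_mul_inv, mul_inv, inv_pow] at key ⊢
  linear_combination (-((n : ℝ) * (n : ℝ)⁻¹) * C * K * W) * key
    - ε * (1 - ‖a‖ ^ 2) * Dq a y ^ 2 * C * K * W * e1
    + (Rq ε a y * W * C * (n : ℝ)⁻¹ * T * ε⁻¹ * 2 * (1 - ‖a‖ ^ 2)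
      * (‖y‖ ^ 2 - 2 * ⟪a, y⟫ + ‖a‖ ^ 2) * (Dq a y)⁻¹) * e2

/-! ### Green's second identity -/

/-- The regularised Green function times the conformal weight `(1-|y|²)^{2-n}`. -/
def wv (n : ℕ) (ε : ℝ) (a y : En n) : ℝ :=
  (1 - ‖y‖ ^ 2) ^ (2 - (n : ℤ)) * Hh n ε (sq a y)

/-- The `i`-th component of the vector field `w (v ∇u - u ∇v)` of Green's second identity, where
`w = (1-|y|²)^{2-n}` and `v` is the regularised Green function. -/
def Xf (n : ℕ) (ε : ℝ) (a : En n) (u : En n → En n) (i : Fin n) (y : En n) : En n :=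
  wv n ε a y • fderiv ℝ u y (basisE n i) - (Bs n ε a y * Vf a y i) • u y

lemma q_pos {y : En n} (hy : ‖y‖ < 1) : 0 < 1 - ‖y‖ ^ 2 := by nlinarith [norm_nonneg y]

/-- The chain rule factor of `∇(Hh ε (sq a y))`, multiplied by the weight, simplifies to `Bs`; all
powers of `1-|y|²` cancel. -/
lemma kern_sq (hn : 3 ≤ n) {a y : En n} (ha : ‖a‖ < 1) (hy : ‖y‖ < 1) {ε : ℝ} (hε : 0 < ε) :
    (1 - ‖y‖ ^ 2) ^ (2 - (n : ℤ)) * (kern n ε (sq a y) * (2 * (1 - ‖a‖ ^ 2) / Dq a y ^ 2))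
      = Bs n ε a y := by
  have hD := Dq_pos ha hy.le
  have hq := q_pos hy
  have h1 : |1 - sq a y| = ‖y - a‖ ^ 2 / Dq a y := by
    rw [one_sub_sq hD.ne', abs_of_nonneg (by positivity)]
  have h2 : Rq ε a y = Dq a y ^ 2 * (‖y - a‖ ^ 2 / Dq a y + ε) := by
    unfold Rq; field_simp
  have h3 : (Dq a y ^ 2) ^ (-(n : ℝ) / 2) = (Dq a y ^ n)⁻¹ := by
    rw [← Real.rpow_natCast, ← Real.rpow_mul hD.le, ← Real.rpow_natCast, ← Real.rpow_neg hD.le]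
    congr 1; push_cast; ring
  have h4 : (1 - ‖y‖ ^ 2) ^ (2 - (n : ℤ)) * (1 - ‖y‖ ^ 2) ^ (n - 2) = 1 := by
    rw [← zpow_natCast (1 - ‖y‖ ^ 2) (n - 2), ← zpow_add₀ hq.ne']
    have : 2 - (n : ℤ) + ((n - 2 : ℕ) : ℤ) = 0 := by omega
    rw [this, zpow_zero]
  have h5 : (1 - ‖a‖ ^ 2) ^ (n - 1) = (1 - ‖a‖ ^ 2) ^ (n - 2) * (1 - ‖a‖ ^ 2) := by
    rw [← pow_succ]; congr 1; omega
  have h6 : Dq a y ^ n = Dq a y ^ (n - 2) * Dq a y ^ 2 := by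
    rw [← pow_add]; congr 1; omega
  have hn0 : (n : ℝ) ≠ 0 := by positivity
  rw [Bs, kern, h1, h2, Real.mul_rpow (by positivity) (by positivity), h3, h5, h6]
  set Z := (‖y - a‖ ^ 2 / Dq a y + ε) ^ (-(n : ℝ) / 2)
  set K := cut ε (sq a y)
  have h7 : sq a y ^ (n - 2) = (1 - ‖a‖ ^ 2) ^ (n - 2) * (1 - ‖y‖ ^ 2) ^ (n - 2)
      * ((Dq a y) ^ (n - 2))⁻¹ := by
    rw [sq, div_pow, mul_pow, div_eq_mul_inv]
  rw [h7]
  calc _ = ((1 - ‖y‖ ^ 2) ^ (2 - (n : ℤ)) * (1 - ‖y‖ ^ 2) ^ (n - 2)) * (1 / (2 * n) * K *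
        ((1 - ‖a‖ ^ 2) ^ (n - 2) * ((Dq a y) ^ (n - 2))⁻¹) * Z
        * (2 * (1 - ‖a‖ ^ 2) / Dq a y ^ 2)) := by ring
    _ = _ := by rw [h4]; field_simp

lemma hasFDerivAt_wv (hn : 3 ≤ n) {a y : En n} (ha : ‖a‖ < 1) (hy : ‖y‖ < 1) {ε : ℝ}
    (hε : 0 < ε) :
    HasFDerivAt (wv n ε a) (Bs n ε a y • innerSL ℝ (Vf a y) +
      (Hh n ε (sq a y) * (2 * ((n : ℝ) - 2) * (1 - ‖y‖ ^ 2) ^ (1 - (n : ℤ)))) • innerSL ℝ y) y := by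
  have hD := Dq_pos ha hy.le
  have hq := q_pos hy
  have h1 := (hasDerivAt_zpow (2 - (n : ℤ)) _ (Or.inl hq.ne')).comp_hasFDerivAt y (hasFDerivAt_q y)
  have h2 := (hasDerivAt_Hh n hε (sq a y)).comp_hasFDerivAt y (hasFDerivAt_sq a y hD.ne')
  refine (h1.mul h2).congr_fderiv (ContinuousLinearMap.ext fun v => ?_)
  simp only [_root_.add_apply, _root_.smul_apply, _root_.neg_apply, innerSL_apply_apply,
    smul_eq_mul, Function.comp, ← kern_sq hn ha hy hε]
  have : 2 - (n : ℤ) - 1 = 1 - (n : ℤ) := by ring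
  rw [this]
  push_cast
  ring

lemma contDiffAt_wv {a y : En n} (ha : ‖a‖ < 1) (hy : ‖y‖ < 1) {ε : ℝ}
    (hε : 0 < ε) : ContDiffAt ℝ 1 (wv n ε a) y := by
  have hq := q_pos hy
  have h0 : ContDiff ℝ 1 fun y : En n => ‖y‖ ^ 2 := contDiff_norm_sq ℝ
  have h1 : ContDiffAt ℝ 1 (fun y : En n => (1 - ‖y‖ ^ 2) ^ (2 - (n : ℤ))) y := by
    have : ContDiffAt ℝ 1 (fun x : ℝ => x ^ (2 - (n : ℤ))) (1 - ‖y‖ ^ 2) := by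
      rcases (2 - (n : ℤ)).eq_nat_or_neg with ⟨m, hm | hm⟩
      · rw [hm]; simp only [zpow_natCast]; fun_prop
      · rw [hm]; simp only [zpow_neg, zpow_natCast]
        exact (contDiffAt_id.pow m).inv (pow_ne_zero _ hq.ne')
    exact this.comp (f := fun y : En n => 1 - ‖y‖ ^ 2) y (contDiff_const.sub h0).contDiffAt
  exact h1.mul ((contDiff_Hh n hε).contDiffAt.comp y (contDiffAt_sq ha hy.le))

lemma Xf_eq_zero {a : En n} (ha : ‖a‖ < 1) {ε : ℝ} (hε : 0 < ε) (u : En n → En n) (i : Fin n)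
    {y : En n} (hy : 1 - ‖y‖ ^ 2 ≤ ε * (1 - ‖a‖) ^ 2) : Xf n ε a u i y = 0 := by
  have := sq_le_of_le ha hε hy
  simp [Xf, wv, Bs, Hh_zero n hε this, cut_zero hε this]

lemma divB_eq_zero {a : En n} {ε : ℝ} (hε : 0 < ε)
    {y : En n} (hy : sq a y ≤ ε) : divB n ε a y = 0 := by
  have h2 : deriv Real.smoothTransition (sq a y / ε - 1) = 0 := by
    have : sq a y / ε - 1 ≤ 0 := by have := (div_le_one hε).2 hy; linarith
    refine IsLocalMin.deriv_eq_zero (Filter.Eventually.of_forall fun x => ?_)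
    rw [Real.smoothTransition.zero_of_nonpos this]
    exact Real.smoothTransition.nonneg x
  simp [divB, h2, cut_zero hε hy]

lemma contDiffAt_fderiv {u : En n → En n} (hu2 : ContDiffOn ℝ 2 u (ball (0 : En n) 1))
    {y : En n} (hy : ‖y‖ < 1) (v : En n) : ContDiffAt ℝ 1 (fun y => fderiv ℝ u y v) y := by
  have h1 : ContDiffAt ℝ 2 u y := hu2.contDiffAt (isOpen_ball.mem_nhds (by simpa using hy))
  have h2 : ContDiffAt ℝ 1 (fderiv ℝ u) y := h1.fderiv_right (by norm_num)
  exact h2.clm_apply contDiffAt_const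

lemma contDiff_Xf {a : En n} (ha : ‖a‖ < 1) {ε : ℝ} (hε : 0 < ε) {u : En n → En n}
    (hu2 : ContDiffOn ℝ 2 u (ball (0 : En n) 1)) (i : Fin n) :
    ContDiff ℝ 1 (Xf n ε a u i) := by
  rw [contDiff_iff_contDiffAt]
  intro y
  rcases lt_or_ge ‖y‖ 1 with hy | hy
  · have h1 : ContDiffAt ℝ 2 u y := hu2.contDiffAt (isOpen_ball.mem_nhds (by simpa using hy))
    have h3 : ContDiff ℝ 1 fun y => Vf a y i :=
      (EuclideanSpace.proj (𝕜 := ℝ) i).contDiff.comp (contDiff_Vf a)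
    exact ((contDiffAt_wv ha hy hε).smul (contDiffAt_fderiv hu2 hy _)).sub
      (((contDiffAt_Bs ha hy.le hε).mul h3.contDiffAt).smul (h1.of_le (by norm_num)))
  · have hpos : 0 < ε * (1 - ‖a‖) ^ 2 := by
      have : 0 < 1 - ‖a‖ := by linarith
      positivity
    have : ∀ᶠ z in 𝓝 y, 1 - ‖z‖ ^ 2 < ε * (1 - ‖a‖) ^ 2 := by
      have hc : Continuous fun z : En n => 1 - ‖z‖ ^ 2 := by fun_prop
      exact hc.continuousAt.eventually_lt continuousAt_const
        (show 1 - ‖y‖ ^ 2 < _ by nlinarith)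
    have h0 : Xf n ε a u i =ᶠ[𝓝 y] fun _ => 0 :=
      this.mono fun z hz => Xf_eq_zero ha hε u i hz.le
    exact contDiffAt_const.congr_of_eventuallyEq h0

lemma hasCompactSupport_Xf {a : En n} (ha : ‖a‖ < 1) {ε : ℝ} (hε : 0 < ε) (u : En n → En n)
    (i : Fin n) : HasCompactSupport (Xf n ε a u i) := by
  refine HasCompactSupport.intro (isCompact_closedBall (0 : En n) 1) fun y hy => ?_
  refine Xf_eq_zero ha hε u i ?_
  have h1 : 1 < ‖y‖ := by simpa using hy
  have : 0 ≤ ε * (1 - ‖a‖) ^ 2 := by positivity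
  nlinarith

/-- A compactly supported `C¹` field has derivatives of integral zero. -/
lemma integral_fderiv_eq_zero {X : En n → En n} (h1 : ContDiff ℝ 1 X) (h2 : HasCompactSupport X)
    (v : En n) : Integrable (fun y => fderiv ℝ X y v) ∧ ∫ y, fderiv ℝ X y v = 0 := by
  have hi : Integrable (fun y => fderiv ℝ X y v) := by
    refine Continuous.integrable_of_hasCompactSupport
      ((h1.continuous_fderiv (by norm_num)).clm_apply continuous_const) ?_
    exact (h2.fderiv (𝕜 := ℝ)).comp_left (g := fun L : En n →L[ℝ] En n => L v) (by simp)
  refine ⟨hi, ?_⟩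
  have := integral_smul_fderiv_eq_neg_fderiv_smul_of_integrable (μ := (volume : Measure (En n)))
    (𝕜 := ℝ) (f := fun _ => (1 : ℝ)) (g := X) (v := v) (by simp) (by simpa using hi)
    (by simpa using h1.continuous.integrable_of_hasCompactSupport h2)
    (fun _ _ => differentiableAt_const _)
    (fun y _ => h1.differentiable (by norm_num) y)
  simpa using this

lemma inner_basisE (x : En n) (i : Fin n) : ⟪x, basisE n i⟫ = x i := by
  simp [basisE, EuclideanSpace.inner_single_right]

lemma sum_fderiv_basisE (f' : En n →L[ℝ] ℝ) (v : En n) :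
    ∑ i, v i * f' (basisE n i) = f' v := by
  conv_rhs => rw [← (EuclideanSpace.basisFun (Fin n) ℝ).sum_repr v]
  simp [map_sum, basisE]

/-- The divergence of the field of Green's second identity: the gradient of the weight
`(1-|y|²)^{2-n}` produces exactly the first-order term of `Δ_h`. -/
lemma sum_fderiv_Xf (hn : 3 ≤ n) {a : En n} (ha : ‖a‖ < 1) {ε : ℝ} (hε : 0 < ε)
    {u : En n → En n} (hu2 : ContDiffOn ℝ 2 u (ball (0 : En n) 1)) {y : En n} (hy : ‖y‖ < 1) :
    ∑ i, fderiv ℝ (Xf n ε a u i) y (basisE n i) =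
      (Hh n ε (sq a y) * ((1 - ‖y‖ ^ 2) ^ n)⁻¹) • hypLap n u y - divB n ε a y • u y := by
  have hq := q_pos hy
  have hu : HasFDerivAt u (fderiv ℝ u y) y :=
    ((hu2.contDiffAt (isOpen_ball.mem_nhds (by simpa using hy))).differentiableAt
      (by norm_num)).hasFDerivAt
  have hdu : ∀ i, HasFDerivAt (fun y => fderiv ℝ u y (basisE n i))
      (fderiv ℝ (fun y => fderiv ℝ u y (basisE n i)) y) y := fun i =>
    ((contDiffAt_fderiv hu2 hy _).differentiableAt (by norm_num)).hasFDerivAt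
  obtain ⟨f', hf, hdiv⟩ := exists_fderiv_Bs hn ha hy.le hε
  have hV : ∀ i, HasFDerivAt (fun y => Vf a y i)
      (a i • (-((2 : ℝ) • innerSL ℝ y)) - ((1 - 2 * ⟪a, y⟫ + ‖a‖ ^ 2) •
        (EuclideanSpace.proj (𝕜 := ℝ) i : En n →L[ℝ] ℝ) + y i • (-((2 : ℝ) • innerSL ℝ a)))) y := by
    intro i
    have h1 := (hasFDerivAt_q y).mul_const (a i)
    have h2 := ((((hasFDerivAt_inner a y).const_mul 2).const_sub 1).add_const (‖a‖ ^ 2)).mul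
      ((EuclideanSpace.proj (𝕜 := ℝ) i : En n →L[ℝ] ℝ).hasFDerivAt (x := y))
    exact h1.sub h2
  have hX : ∀ i, fderiv ℝ (Xf n ε a u i) y (basisE n i) =
      wv n ε a y • fderiv ℝ (fun y => fderiv ℝ u y (basisE n i)) y (basisE n i)
      + (Hh n ε (sq a y) * (2 * ((n : ℝ) - 2) * (1 - ‖y‖ ^ 2) ^ (1 - (n : ℤ)))) •
        (y i • fderiv ℝ u y (basisE n i))
      - (Vf a y i * f' (basisE n i) + Bs n ε a y * (2 * (y i * a i) - 2 * (a i * y i)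
          - (1 - 2 * ⟪a, y⟫ + ‖a‖ ^ 2))) • u y := by
    intro i
    have h := ((hasFDerivAt_wv hn ha hy hε).smul (hdu i)).sub ((hf.mul (hV i)).smul hu)
    have h' : HasFDerivAt (Xf n ε a u i) _ y := h
    rw [h'.fderiv]
    have hp : (EuclideanSpace.proj (𝕜 := ℝ) i : En n →L[ℝ] ℝ) (basisE n i) = 1 := by
      simp [basisE]
    simp only [_root_.add_apply, _root_.smul_apply, _root_.neg_apply, _root_.sub_apply,
      innerSL_apply_apply, smul_eq_mul, inner_basisE, ContinuousLinearMap.smulRight_apply, hp,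
      Pi.mul_apply]
    module
  have e1 : Hh n ε (sq a y) * ((1 - ‖y‖ ^ 2) ^ n)⁻¹ * (1 - ‖y‖ ^ 2) ^ 2 = wv n ε a y := by
    rw [wv, zpow_sub₀ hq.ne', zpow_natCast]
    norm_cast
    ring
  have e2 : Hh n ε (sq a y) * ((1 - ‖y‖ ^ 2) ^ n)⁻¹ * (2 * ((n : ℝ) - 2) * (1 - ‖y‖ ^ 2)) =
      Hh n ε (sq a y) * (2 * ((n : ℝ) - 2) * (1 - ‖y‖ ^ 2) ^ (1 - (n : ℤ))) := by
    rw [zpow_sub₀ hq.ne', zpow_natCast, zpow_one]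
    ring
  rw [Finset.sum_congr rfl fun i _ => hX i, Finset.sum_sub_distrib, Finset.sum_add_distrib,
    ← Finset.smul_sum, ← Finset.smul_sum, ← Finset.sum_smul, hypLap, smul_add, smul_smul,
    smul_smul, e1, e2, lap, Finset.sum_add_distrib, sum_fderiv_basisE, ← hdiv, ← Finset.mul_sum]
  congr 2
  simp only [mul_comm (y _) (a _), sub_self, zero_sub, Finset.sum_const, Finset.card_univ,
    Fintype.card_fin, nsmul_eq_mul]
  ring

/-- Green's second identity for `u` and the regularised Green function. There is no boundary term
because the truncated Green function vanishes near the sphere. -/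
lemma green_identity (hn : 3 ≤ n) {a : En n} (ha : ‖a‖ < 1) {ε : ℝ} (hε : 0 < ε)
    {u : En n → En n} (hu2 : ContDiffOn ℝ 2 u (ball (0 : En n) 1)) :
    IntegrableOn (fun y => (Hh n ε (sq a y) * ((1 - ‖y‖ ^ 2) ^ n)⁻¹) • hypLap n u y
      - divB n ε a y • u y) (ball 0 1) ∧
    ∫ y in ball (0 : En n) 1, ((Hh n ε (sq a y) * ((1 - ‖y‖ ^ 2) ^ n)⁻¹) • hypLap n u y
      - divB n ε a y • u y) = 0 := by
  have hi := fun i => integral_fderiv_eq_zero (contDiff_Xf ha hε hu2 i)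
    (hasCompactSupport_Xf ha hε u i) (basisE n i)
  have hI : Integrable fun y => ∑ i, fderiv ℝ (Xf n ε a u i) y (basisE n i) :=
    integrable_finsetSum _ fun i _ => (hi i).1
  have heq : EqOn (fun y => ∑ i, fderiv ℝ (Xf n ε a u i) y (basisE n i))
      (fun y => (Hh n ε (sq a y) * ((1 - ‖y‖ ^ 2) ^ n)⁻¹) • hypLap n u y
      - divB n ε a y • u y) (ball 0 1) := fun y hy =>
    sum_fderiv_Xf hn ha hε hu2 (by simpa using hy)
  refine ⟨(integrableOn_congr_fun heq measurableSet_ball).1 hI.integrableOn, ?_⟩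
  rw [← setIntegral_congr_fun measurableSet_ball heq, setIntegral_eq_integral_of_forall_compl_eq_zero,
    integral_finsetSum _ fun i _ => (hi i).1]
  · simp [fun i => (hi i).2]
  · intro y hy
    have h1 : 1 ≤ ‖y‖ := by simpa using hy
    refine Finset.sum_eq_zero fun i _ => ?_
    have hpos : 0 < ε * (1 - ‖a‖) ^ 2 := by
      have : 0 < 1 - ‖a‖ := by linarith
      positivity
    have : ∀ᶠ z in 𝓝 y, 1 - ‖z‖ ^ 2 < ε * (1 - ‖a‖) ^ 2 := by
      have hc : Continuous fun z : En n => 1 - ‖z‖ ^ 2 := by fun_prop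
      exact hc.continuousAt.eventually_lt continuousAt_const
        (show 1 - ‖y‖ ^ 2 < _ by nlinarith)
    have h0 : Xf n ε a u i =ᶠ[𝓝 y] fun _ => 0 :=
      this.mono fun z hz => Xf_eq_zero ha hε u i hz.le
    rw [h0.fderiv_eq]; simp

/-! ### The Green function in terms of `1 - |φ_a(y)|²` -/

/-- The Green function in the variable `s = 1 - r²`. -/
def G0 (n : ℕ) (s : ℝ) : ℝ :=
  ∫ x in (0 : ℝ)..s, 1 / (2 * n) * x ^ (n - 2) * (1 - x) ^ (-(n : ℝ) / 2)

lemma gfun_sqrt (hn : 3 ≤ n) {s : ℝ} (h0 : 0 < s) (h1 : s < 1) :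
    gfun n (Real.sqrt (1 - s)) = G0 n s := by
  set r := Real.sqrt (1 - s) with hr
  have hr0 : 0 < r := Real.sqrt_pos.2 (by linarith)
  have hr2 : r ^ 2 = 1 - s := Real.sq_sqrt (by linarith)
  have hr1 : r < 1 := by nlinarith
  have hn' : (n : ℝ) ≠ 0 := by positivity
  have key := intervalIntegral.integral_comp_mul_deriv' (a := r) (b := 1)
    (f := fun t : ℝ => 1 - t ^ 2) (f' := fun t => -(2 * t))
    (g := fun x => 1 / (2 * n) * x ^ (n - 2) * (1 - x) ^ (-(n : ℝ) / 2))
    (fun t _ => by simpa using (hasDerivAt_pow 2 t).const_sub 1) (by fun_prop)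
    (by
      refine ContinuousOn.mul (by fun_prop) (ContinuousOn.rpow_const (by fun_prop) ?_)
      rintro _ ⟨t, ht, rfl⟩
      rw [uIcc_of_le hr1.le] at ht
      left
      have : 0 < t := hr0.trans_le ht.1
      simp; positivity)
  have e1 : (1 : ℝ) - r ^ 2 = s := by rw [hr2]; ring
  simp only [e1, Function.comp] at key
  rw [G0, intervalIntegral.integral_symm]
  rw [show (1 : ℝ) - 1 ^ 2 = 0 by norm_num] at key
  rw [← key, gfun, ← intervalIntegral.integral_const_mul, ← intervalIntegral.integral_neg]
  refine intervalIntegral.integral_congr fun t ht => ?_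
  rw [uIcc_of_le hr1.le] at ht
  have ht0 : 0 < t := hr0.trans_le ht.1
  have e2 : (1 - (1 - t ^ 2)) ^ (-(n : ℝ) / 2) = (t ^ n)⁻¹ := by
    rw [sub_sub_cancel, ← Real.rpow_natCast t 2, ← Real.rpow_mul ht0.le, ← Real.rpow_natCast t n,
      ← Real.rpow_neg ht0.le]
    congr 1; push_cast; ring
  have e3 : t ^ n = t ^ (n - 1) * t := by rw [← pow_succ]; congr 1; omega
  simp only [e2, e3]
  field_simp

/-- Bound on `kern` uniform in `ε`. -/
lemma kern_le (hn : 3 ≤ n) {ε x : ℝ} (hε : 0 < ε) (h0 : 0 ≤ x) (h1 : x < 1) :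
    kern n ε x ≤ 1 / 2 * x ^ (n - 2) * (1 - x) ^ (-(n : ℝ) / 2) := by
  have e1 : (|1 - x| + ε) ^ (-(n : ℝ) / 2) ≤ (1 - x) ^ (-(n : ℝ) / 2) := by
    apply Real.rpow_le_rpow_of_nonpos (by linarith)
    · rw [abs_of_pos (by linarith)]; linarith
    · have : (0 : ℝ) ≤ n := by positivity
      linarith
  have e2 : 1 / (2 * (n : ℝ)) ≤ 1 / 2 := by
    have : (3 : ℝ) ≤ n := by exact_mod_cast hn
    gcongr; linarith
  have e3 := cut_le_one ε x
  have e4 := cut_nonneg ε x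
  have e5 : 0 ≤ (|1 - x| + ε) ^ (-(n : ℝ) / 2) := by positivity
  unfold kern
  calc _ ≤ 1 / 2 * 1 * x ^ (n - 2) * (1 - x) ^ (-(n : ℝ) / 2) := by gcongr
    _ = _ := by ring

lemma tendsto_kern {x : ℝ} (h0 : 0 < x) (h1 : x < 1) :
    Tendsto (fun ε => kern n ε x) (𝓝[>] 0)
      (𝓝 (1 / (2 * n) * x ^ (n - 2) * (1 - x) ^ (-(n : ℝ) / 2))) := by
  have e1 : Tendsto (fun ε => cut ε x) (𝓝[>] 0) (𝓝 1) := by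
    refine tendsto_const_nhds.congr' ?_
    filter_upwards [Ioo_mem_nhdsGT (show (0 : ℝ) < x / 2 by linarith)] with ε hε
    exact (cut_one hε.1 (by linarith [hε.2])).symm
  have e2 : Tendsto (fun ε : ℝ => (|1 - x| + ε) ^ (-(n : ℝ) / 2)) (𝓝[>] 0)
      (𝓝 ((1 - x) ^ (-(n : ℝ) / 2))) := by
    have e3 : Tendsto (fun ε : ℝ => |1 - x| + ε) (𝓝[>] 0) (𝓝 (1 - x)) := by
      have : Tendsto (fun ε : ℝ => |1 - x| + ε) (𝓝 0) (𝓝 (|1 - x| + 0)) :=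
        (continuous_const.add continuous_id).tendsto 0
      rw [add_zero, abs_of_pos (by linarith)] at this
      rw [abs_of_pos (by linarith)]
      exact this.mono_left nhdsWithin_le_nhds
    exact e3.rpow_const (Or.inl (by linarith))
  have := ((tendsto_const_nhds (x := 1 / (2 * (n : ℝ)))).mul e1).mul
    (tendsto_const_nhds (x := x ^ (n - 2))) |>.mul e2
  simpa [kern] using this

lemma tendsto_Hh (hn : 3 ≤ n) {s : ℝ} (h0 : 0 < s) (h1 : s < 1) :
    Tendsto (fun ε => Hh n ε s) (𝓝[>] 0) (𝓝 (G0 n s)) := by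
  unfold Hh G0
  refine intervalIntegral.tendsto_integral_filter_of_dominated_convergence
    (fun _ => 1 / 2 * 1 * (1 - s) ^ (-(n : ℝ) / 2)) ?_ ?_ (by simp) ?_
  · filter_upwards [self_mem_nhdsWithin] with ε hε
    exact (continuous_kern n hε).aestronglyMeasurable
  · filter_upwards [self_mem_nhdsWithin] with ε hε
    refine ae_of_all _ fun x hx => ?_
    rw [uIoc_of_le h0.le] at hx
    rw [Real.norm_of_nonneg (kern_nonneg n hε hx.1.le)]
    refine (kern_le hn hε hx.1.le (by linarith [hx.2])).trans ?_
    have e1 : x ^ (n - 2) ≤ 1 := pow_le_one₀ hx.1.le (by linarith [hx.2])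
    have e2 : (1 - x) ^ (-(n : ℝ) / 2) ≤ (1 - s) ^ (-(n : ℝ) / 2) := by
      apply Real.rpow_le_rpow_of_nonpos (by linarith) (by linarith [hx.2])
      have : (0 : ℝ) ≤ n := by positivity
      linarith
    have e3 : 0 ≤ (1 - x) ^ (-(n : ℝ) / 2) := Real.rpow_nonneg (by linarith [hx.2]) _
    gcongr
  · refine ae_of_all _ fun x hx => ?_
    rw [uIoc_of_le h0.le] at hx
    exact tendsto_kern hx.1 (by linarith [hx.2])

/-- Decay of the regularised Green function near the sphere. -/
lemma Hh_le_of_small (hn : 3 ≤ n) {ε s : ℝ} (hε : 0 < ε) (h0 : 0 ≤ s) (h1 : s ≤ 1 / 2) :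
    Hh n ε s ≤ (1 / 2) ^ (-(n : ℝ) / 2) * s ^ (n - 1) := by
  have : ‖Hh n ε s‖ ≤ ((1 / 2) ^ (-(n : ℝ) / 2) * s ^ (n - 2)) * |s - 0| := by
    refine intervalIntegral.norm_integral_le_of_norm_le_const fun x hx => ?_
    rw [uIoc_of_le h0] at hx
    rw [Real.norm_of_nonneg (kern_nonneg n hε hx.1.le)]
    refine (kern_le hn hε hx.1.le (by linarith [hx.2])).trans ?_
    have e1 : x ^ (n - 2) ≤ s ^ (n - 2) := pow_le_pow_left₀ hx.1.le hx.2 _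
    have e2 : (1 - x) ^ (-(n : ℝ) / 2) ≤ (1 / 2) ^ (-(n : ℝ) / 2) := by
      apply Real.rpow_le_rpow_of_nonpos (by linarith) (by linarith [hx.2])
      have : (0 : ℝ) ≤ n := by positivity
      linarith
    have e3 : 0 ≤ (1 - x) ^ (-(n : ℝ) / 2) := Real.rpow_nonneg (by linarith [hx.2]) _
    have e4 : 0 ≤ x ^ (n - 2) := pow_nonneg hx.1.le _
    calc 1 / 2 * x ^ (n - 2) * (1 - x) ^ (-(n : ℝ) / 2) ≤ 1 * s ^ (n - 2) * (1 / 2) ^ (-(n : ℝ) / 2) := by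
          gcongr; norm_num
      _ = _ := by ring
  rw [Real.norm_of_nonneg (Hh_nonneg n hε h0), sub_zero, abs_of_nonneg h0] at this
  refine this.trans (le_of_eq ?_)
  rw [mul_assoc, ← pow_succ]; congr 2; omega

/-- Growth of the regularised Green function near its pole. -/
lemma Hh_le (hn : 3 ≤ n) {ε s : ℝ} (hε : 0 < ε) (h0 : 0 ≤ s) (h1 : s < 1) :
    Hh n ε s ≤ (1 - s) ^ (1 - (n : ℝ) / 2) := by
  have hn3 : (3 : ℝ) ≤ n := by exact_mod_cast hn
  have hd : ∀ x ∈ uIcc 0 s, HasDerivAt (fun x : ℝ => (1 - x) ^ (1 - (n : ℝ) / 2))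
      (((n : ℝ) / 2 - 1) * (1 - x) ^ (-(n : ℝ) / 2)) x := by
    intro x hx
    rw [uIcc_of_le h0] at hx
    have := ((hasDerivAt_id x).const_sub 1).rpow_const (p := 1 - (n : ℝ) / 2)
      (Or.inl (by simp only [id]; linarith [hx.2]))
    refine this.congr_deriv ?_
    simp only [id]
    rw [show (1 - (n : ℝ) / 2 - 1) = -(n : ℝ) / 2 by ring]; ring
  have hc : ContinuousOn (fun x : ℝ => ((n : ℝ) / 2 - 1) * (1 - x) ^ (-(n : ℝ) / 2)) (uIcc 0 s) := by
    refine ContinuousOn.mul continuousOn_const (ContinuousOn.rpow_const (by fun_prop) ?_)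
    intro x hx
    rw [uIcc_of_le h0] at hx
    left; linarith [hx.2]
  have h2 := intervalIntegral.integral_eq_sub_of_hasDerivAt hd hc.intervalIntegrable
  have h3 : Hh n ε s ≤ ∫ x in (0:ℝ)..s, ((n : ℝ) / 2 - 1) * (1 - x) ^ (-(n : ℝ) / 2) := by
    refine intervalIntegral.integral_mono_on h0 ((continuous_kern n hε).intervalIntegrable _ _)
      hc.intervalIntegrable fun x hx => ?_
    refine (kern_le hn hε hx.1 (by linarith [hx.2])).trans ?_
    have e1 : x ^ (n - 2) ≤ 1 := pow_le_one₀ hx.1 (by linarith [hx.2])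
    have e3 : 0 ≤ (1 - x) ^ (-(n : ℝ) / 2) := Real.rpow_nonneg (by linarith [hx.2]) _
    have e4 : 0 ≤ x ^ (n - 2) := pow_nonneg hx.1 _
    have : 1 / 2 * x ^ (n - 2) ≤ (n : ℝ) / 2 - 1 := by nlinarith
    gcongr
  rw [h2] at h3
  simp at h3
  linarith

/-- The identity `|φ_a(y)|² = 1 - sq a y`. -/
lemma norm_mobius {a y : En n} (ha : ‖a‖ < 1) (hy : ‖y‖ ≤ 1) :
    ‖mobius a y‖ = Real.sqrt (1 - sq a y) := by
  have hD := Dq_pos ha hy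
  have hb : qbracket a y ^ 2 = Dq a y := by
    rw [qbracket, ← Dq_eq, Real.sq_sqrt hD.le]
  rw [one_sub_sq hD.ne']
  have h1 : 0 ≤ 1 - ‖a‖ ^ 2 := by nlinarith [norm_nonneg a]
  have h2 : Dq a y = ‖y - a‖ ^ 2 + (1 - ‖y‖ ^ 2) * (1 - ‖a‖ ^ 2) := Dq_eq a y
  have h3 := norm_sub_sq' a y
  have h4 : ⟪a, y⟫ = (‖y‖ ^ 2 + ‖a‖ ^ 2 - ‖y - a‖ ^ 2) / 2 := by linarith
  have h5 : ‖‖y - a‖ ^ 2 • a - (1 - ‖a‖ ^ 2) • (y - a)‖ ^ 2 = ‖y - a‖ ^ 2 * Dq a y := by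
    rw [norm_sub_sq_real, norm_smul, norm_smul, real_inner_smul_left, real_inner_smul_right,
      inner_sub_right, real_inner_self_eq_norm_sq, Real.norm_of_nonneg h1,
      Real.norm_of_nonneg (sq_nonneg _), h4, h2]
    ring
  symm
  rw [Real.sqrt_eq_iff_mul_self_eq (by positivity) (norm_nonneg _), ← pow_two, mobius, hb,
    norm_smul, mul_pow, h5, Real.norm_of_nonneg (inv_nonneg.2 hD.le)]
  field_simp

/-! ### Convergence to the Green integral -/

lemma vol_ball_pos (n : ℕ) : 0 < volume (ball (0 : En n) 1) := measure_ball_pos _ _ one_pos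
lemma vol_ball_lt (n : ℕ) : volume (ball (0 : En n) 1) < ⊤ := measure_ball_lt_top

lemma measurable_density (n : ℕ) :
    Measurable fun x : En n => ENNReal.ofReal ((1 - ‖x‖ ^ 2) ^ n)⁻¹ := by fun_prop

/-- The integrability hypothesis on `ψ` in terms of Lebesgue measure: the weights `(1-|y|²)^{n-1}`
and `(1-|y|²)^{-n}` combine to `(1-|y|²)⁻¹`. -/
lemma integrableOn_of_tau {ψ : En n → En n} (hn : 3 ≤ n)
    (hm : AEStronglyMeasurable ψ (volume.restrict (ball 0 1)))
    (hint : ∫⁻ x in ball (0 : En n) 1,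
        ENNReal.ofReal ((1 - ‖x‖ ^ 2) ^ (n - 1) * ‖ψ x‖) ∂(tauMeasure n) < ⊤) :
    IntegrableOn (fun y => (1 - ‖y‖ ^ 2)⁻¹ * ‖ψ y‖) (ball (0 : En n) 1) := by
  refine ⟨?_, ?_⟩
  · have : Measurable fun y : En n => (1 - ‖y‖ ^ 2)⁻¹ := by fun_prop
    exact this.aestronglyMeasurable.mul hm.norm
  · rw [tauMeasure, setLIntegral_withDensity_eq_setLIntegral_mul_non_measurable _
      (measurable_density n) _ measurableSet_ball (ae_of_all _ fun x => ENNReal.ofReal_lt_top),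
      nuMeasure, Measure.restrict_smul, lintegral_smul_measure, smul_eq_mul] at hint
    have h0 : (volume (ball (0 : En n) 1))⁻¹ ≠ 0 := ENNReal.inv_ne_zero.2 (vol_ball_lt n).ne
    have h1 := ENNReal.lt_top_of_mul_ne_top_right hint.ne h0
    rw [HasFiniteIntegral]
    refine lt_of_eq_of_lt (setLIntegral_congr_fun measurableSet_ball fun y hy => ?_) h1
    have hq := q_pos (y := y) (by simpa using hy)
    simp only [Pi.mul_apply]
    rw [← ENNReal.ofReal_mul (by positivity), Real.enorm_eq_ofReal (by positivity), ← mul_assoc]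
    congr 2
    have : (1 - ‖y‖ ^ 2) ^ n = (1 - ‖y‖ ^ 2) ^ (n - 1) * (1 - ‖y‖ ^ 2) := by
      rw [← pow_succ]; congr 1; omega
    rw [this]; field_simp

lemma integrableOn_norm_sub_rpow (hn : 3 ≤ n) (a : En n) (ha : ‖a‖ < 1) :
    IntegrableOn (fun y : En n => ‖y - a‖ ^ (2 - (n : ℝ))) (ball 0 1) := by
  have h1 : IntegrableOn (fun y : En n => ‖y‖ ^ (2 - (n : ℝ))) (ball 0 2) := by
    refine integrableOn_ball_of_norm_le_rpow (C := 1) (α := (n : ℝ) - 2) (by simp; omega)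
      (by simp) (ae_of_all _ fun x => ?_)
      (measurable_norm.pow_const _).aestronglyMeasurable
    rw [Real.norm_of_nonneg (by positivity), one_mul, neg_sub]
  rw [← integrable_indicator_iff measurableSet_ball] at h1 ⊢
  refine (h1.comp_sub_right a).mono
    (AEStronglyMeasurable.indicator
      ((measurable_id.sub_const a).norm.pow_const _).aestronglyMeasurable measurableSet_ball) (ae_of_all _ fun y => ?_)
  by_cases hy : y ∈ ball (0 : En n) 1
  · have : y - a ∈ ball (0 : En n) 2 := by
      rw [mem_ball_zero_iff] at hy ⊢
      linarith [norm_sub_le y a]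
    rw [indicator_of_mem hy, indicator_of_mem this]
  · rw [indicator_of_notMem hy, norm_zero]; positivity

/-- Uniform majorant for the regularised Green function times the density of `τ`. The first term is
handled by the integrability hypothesis on `ψ`, the second by the boundedness of `ψ`. -/
lemma Hh_dominated (hn : 3 ≤ n) {a : En n} (ha : ‖a‖ < 1) :
    ∃ C₁ C₂ : ℝ, 0 ≤ C₁ ∧ 0 ≤ C₂ ∧ ∀ ε > 0, ∀ y : En n, ‖y‖ < 1 → y ≠ a →
      Hh n ε (sq a y) * ((1 - ‖y‖ ^ 2) ^ n)⁻¹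
        ≤ C₁ * (1 - ‖y‖ ^ 2)⁻¹ + C₂ * ‖y - a‖ ^ (2 - (n : ℝ)) := by
  set d := (1 - ‖a‖) ^ 2 with hd
  have hd0 : 0 < d := by have : 0 < 1 - ‖a‖ := by linarith
                         positivity
  refine ⟨(1 / 2) ^ (-(n : ℝ) / 2) * (d⁻¹) ^ (n - 1),
    (1 / 4) ^ (1 - (n : ℝ) / 2) * ((d / 2) ^ n)⁻¹, by positivity, by positivity, ?_⟩
  intro ε hε y hy hne
  have hq := q_pos hy
  have hs0 := sq_pos ha hy
  have hs1 := sq_lt_one ha hy.le hne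
  have hD := Dq_pos ha hy.le
  have hDl := Dq_lower' ha hy.le
  have hDu := Dq_le ha hy.le
  have hc0 : 0 < 1 - ‖a‖ ^ 2 := q_pos ha
  have hc1 : 1 - ‖a‖ ^ 2 ≤ 1 := by have := sq_nonneg ‖a‖; linarith
  have hN : 0 < ‖y - a‖ := norm_pos_iff.2 (sub_ne_zero.2 hne)
  have hsD : sq a y * Dq a y = (1 - ‖a‖ ^ 2) * (1 - ‖y‖ ^ 2) := by
    unfold sq; field_simp
  rcases le_or_gt (sq a y) (1 / 2) with h | h
  · have h1 := Hh_le_of_small hn hε hs0.le h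
    have h2 : sq a y ≤ d⁻¹ * (1 - ‖y‖ ^ 2) := by
      rw [inv_mul_eq_div, le_div_iff₀ hd0]
      calc sq a y * d ≤ sq a y * Dq a y := by gcongr
        _ = (1 - ‖a‖ ^ 2) * (1 - ‖y‖ ^ 2) := hsD
        _ ≤ 1 * (1 - ‖y‖ ^ 2) := by gcongr
        _ = _ := one_mul _
    have h3 : sq a y ^ (n - 1) ≤ (d⁻¹) ^ (n - 1) * (1 - ‖y‖ ^ 2) ^ (n - 1) := by
      rw [← mul_pow]; gcongr
    have e : (1 - ‖y‖ ^ 2) ^ n = (1 - ‖y‖ ^ 2) ^ (n - 1) * (1 - ‖y‖ ^ 2) := by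
      rw [← pow_succ]; congr 1; omega
    have h4 : 0 ≤ (1 / 4 : ℝ) ^ (1 - (n : ℝ) / 2) * ((d / 2) ^ n)⁻¹ * ‖y - a‖ ^ (2 - (n : ℝ)) := by
      positivity
    calc _ ≤ ((1 / 2) ^ (-(n : ℝ) / 2) * ((d⁻¹) ^ (n - 1) * (1 - ‖y‖ ^ 2) ^ (n - 1)))
          * ((1 - ‖y‖ ^ 2) ^ n)⁻¹ := by
            gcongr
            exact h1.trans (by gcongr)
      _ = (1 / 2) ^ (-(n : ℝ) / 2) * (d⁻¹) ^ (n - 1) * (1 - ‖y‖ ^ 2)⁻¹ := by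
            rw [e]; field_simp
      _ ≤ _ := by linarith
  · have h1 := Hh_le hn hε hs0.le hs1
    have hqd : d / 2 ≤ 1 - ‖y‖ ^ 2 := by nlinarith
    have h2 : (1 - sq a y) ^ (1 - (n : ℝ) / 2)
        ≤ (1 / 4) ^ (1 - (n : ℝ) / 2) * ‖y - a‖ ^ (2 - (n : ℝ)) := by
      have e1 : ‖y - a‖ ^ (2 - (n : ℝ)) = (‖y - a‖ ^ 2) ^ (1 - (n : ℝ) / 2) := by
        rw [← Real.rpow_natCast, ← Real.rpow_mul hN.le]; congr 1; push_cast; ring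
      rw [e1, ← Real.mul_rpow (by norm_num) (by positivity)]
      apply Real.rpow_le_rpow_of_nonpos (by positivity)
      · rw [one_sub_sq hD.ne', le_div_iff₀ hD]
        nlinarith [sq_nonneg ‖y - a‖]
      · have : (3 : ℝ) ≤ n := by exact_mod_cast hn
        linarith
    have h3 : ((1 - ‖y‖ ^ 2) ^ n)⁻¹ ≤ ((d / 2) ^ n)⁻¹ := by gcongr
    have h4 : 0 ≤ (1 / 2 : ℝ) ^ (-(n : ℝ) / 2) * (d⁻¹) ^ (n - 1) * (1 - ‖y‖ ^ 2)⁻¹ := by positivity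
    calc _ ≤ ((1 / 4) ^ (1 - (n : ℝ) / 2) * ‖y - a‖ ^ (2 - (n : ℝ))) * ((d / 2) ^ n)⁻¹ := by
            gcongr
            exact h1.trans h2
      _ ≤ _ := by linarith

lemma continuousOn_Hh_sq {a : En n} (ha : ‖a‖ < 1) {ε : ℝ} (hε : 0 < ε) :
    ContinuousOn (fun y => Hh n ε (sq a y) * ((1 - ‖y‖ ^ 2) ^ n)⁻¹) (ball 0 1) := by
  intro y hy
  have hy' : ‖y‖ < 1 := by simpa using hy
  have h1 : ContinuousAt (fun y => Hh n ε (sq a y)) y :=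
    (contDiff_Hh n hε).continuous.continuousAt.comp
      (contDiffAt_sq (m := 1) ha hy'.le).continuousAt
  have h2 : ContinuousAt (fun y : En n => ((1 - ‖y‖ ^ 2) ^ n)⁻¹) y :=
    ContinuousAt.inv₀ (by fun_prop) (pow_pos (q_pos hy') n).ne'
  exact (h1.mul h2).continuousWithinAt

/-- Convergence of the regularised Green integrals, without normalising constant. -/
lemma tendsto_green (hn : 3 ≤ n) {a : En n} (ha : ‖a‖ < 1) {ψ : En n → En n}
    (hm : AEStronglyMeasurable ψ (volume.restrict (ball 0 1)))
    (hψb : ∃ K : ℝ, ∀ x ∈ ball (0 : En n) 1, ‖ψ x‖ ≤ K)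
    (hint : ∫⁻ x in ball (0 : En n) 1,
        ENNReal.ofReal ((1 - ‖x‖ ^ 2) ^ (n - 1) * ‖ψ x‖) ∂(tauMeasure n) < ⊤) :
    Tendsto (fun ε => ∫ y in ball (0 : En n) 1, (Hh n ε (sq a y) * ((1 - ‖y‖ ^ 2) ^ n)⁻¹) • ψ y)
      (𝓝[>] 0) (𝓝 (∫ y in ball (0 : En n) 1, (Gh n a y * ((1 - ‖y‖ ^ 2) ^ n)⁻¹) • ψ y)) := by
  obtain ⟨K, hK⟩ := hψb
  obtain ⟨C₁, C₂, hC₁, hC₂, hdom⟩ := Hh_dominated hn ha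
  have : NeZero n := ⟨by omega⟩
  have : Nonempty (Fin n) := ⟨0⟩
  have hae : ∀ᵐ y ∂(volume.restrict (ball (0 : En n) 1)), y ∈ ball (0 : En n) 1 ∧ y ≠ a := by
    refine (ae_restrict_mem measurableSet_ball).and (ae_restrict_of_ae ?_)
    exact compl_mem_ae_iff.2 (measure_singleton a)
  refine tendsto_integral_filter_of_dominated_convergence
    (fun y => C₁ * ((1 - ‖y‖ ^ 2)⁻¹ * ‖ψ y‖) + C₂ * |K| * ‖y - a‖ ^ (2 - (n : ℝ))) ?_ ?_ ?_ ?_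
  · filter_upwards [self_mem_nhdsWithin] with ε hε
    exact ((continuousOn_Hh_sq ha hε).aestronglyMeasurable measurableSet_ball).smul hm
  · filter_upwards [self_mem_nhdsWithin] with ε hε
    filter_upwards [hae] with y hy
    have hy' : ‖y‖ < 1 := by simpa using hy.1
    have hq := q_pos hy'
    have h1 := hdom ε hε y hy' hy.2
    have h2 := Hh_nonneg n hε (sq_pos ha hy').le
    have h3 : ‖ψ y‖ ≤ |K| := (hK y hy.1).trans (le_abs_self K)
    rw [norm_smul, Real.norm_of_nonneg (by positivity)]
    calc _ ≤ (C₁ * (1 - ‖y‖ ^ 2)⁻¹ + C₂ * ‖y - a‖ ^ (2 - (n : ℝ))) * ‖ψ y‖ := by gcongr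
      _ = C₁ * ((1 - ‖y‖ ^ 2)⁻¹ * ‖ψ y‖) + C₂ * ‖ψ y‖ * ‖y - a‖ ^ (2 - (n : ℝ)) := by ring
      _ ≤ _ := by gcongr
  · exact ((integrableOn_of_tau hn hm hint).const_mul C₁).add
      ((integrableOn_norm_sub_rpow hn a ha).const_mul _)
  · filter_upwards [hae] with y hy
    have hy' : ‖y‖ < 1 := by simpa using hy.1
    have hs0 := sq_pos ha hy'
    have hs1 := sq_lt_one ha hy'.le hy.2
    rw [Gh, norm_mobius ha hy'.le, gfun_sqrt hn hs0 hs1]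
    exact ((tendsto_Hh hn hs0 hs1).mul_const _).smul_const _

/-- The Green integral with respect to Lebesgue measure; the factor normalises the volume. -/
lemma GhInt_eq (ψ : En n → En n) (a : En n) :
    GhInt n ψ a = ((volume (ball (0 : En n) 1))⁻¹).toReal •
      ∫ y in ball (0 : En n) 1, (Gh n a y * ((1 - ‖y‖ ^ 2) ^ n)⁻¹) • ψ y := by
  rw [GhInt, tauMeasure, setIntegral_withDensity_eq_setIntegral_toReal_smul (measurable_density n)
    (ae_of_all _ fun x => ENNReal.ofReal_lt_top) _ measurableSet_ball, nuMeasure,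
    Measure.restrict_smul, integral_smul_measure]
  congr 1
  refine setIntegral_congr_fun measurableSet_ball fun y hy => ?_
  have hq := q_pos (y := y) (by simpa using hy)
  rw [ENNReal.toReal_ofReal (by positivity), smul_smul, mul_comm]

/-! ### Concentration at the interior point -/

/-- The part of `-divB` that concentrates at `a`. -/
def inT (n : ℕ) (ε : ℝ) (a y : En n) : ℝ :=
  ε * (1 - ‖a‖ ^ 2) ^ n * cut ε (sq a y) * Dq a y ^ 2 * (Rq ε a y) ^ (-(n : ℝ) / 2 - 1)

/-- The rescaled kernel `ηⁿ inT η² a (a + ηz)`. -/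
def inK (n : ℕ) (η : ℝ) (a z : En n) : ℝ :=
  (1 - ‖a‖ ^ 2) ^ n * cut (η ^ 2) (sq a (a + η • z)) * Dq a (a + η • z) ^ 2
    * (Dq a (a + η • z) * (‖z‖ ^ 2 + Dq a (a + η • z))) ^ (-(n : ℝ) / 2 - 1)

lemma inT_rescale {a z : En n} {η : ℝ} (hη : 0 < η) (ha : ‖a‖ < 1) (hz : ‖a + η • z‖ < 1) :
    η ^ n * inT n (η ^ 2) a (a + η • z) = inK n η a z := by
  have hD := Dq_pos ha hz.le
  have hR : Rq (η ^ 2) a (a + η • z)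
      = η ^ 2 * (Dq a (a + η • z) * (‖z‖ ^ 2 + Dq a (a + η • z))) := by
    rw [Rq, add_sub_cancel_left, norm_smul, Real.norm_of_nonneg hη.le]; ring
  have e : (η ^ 2) ^ (-(n : ℝ) / 2 - 1) = (η ^ (n + 2))⁻¹ := by
    rw [← Real.rpow_natCast η 2, ← Real.rpow_mul hη.le, ← Real.rpow_natCast, ← Real.rpow_neg hη.le]
    congr 1; push_cast; ring
  rw [inT, inK, hR, Real.mul_rpow (by positivity) (by positivity), e, pow_add]
  field_simp

/-- The total mass of the limiting kernel. -/
lemma integral_kernel (hn : 3 ≤ n) {c : ℝ} (hc : 0 < c) :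
    ∫ z : En n, c ^ 2 * (‖z‖ ^ 2 + c ^ 2) ^ (-(n : ℝ) / 2 - 1) = volume.real (ball (0 : En n) 1) := by
  have : Nontrivial (En n) := by
    have : Nonempty (Fin n) := ⟨⟨0, by omega⟩⟩
    infer_instance
  have hn' : (n : ℝ) ≠ 0 := by positivity
  rw [integral_fun_norm_addHaar volume
    (fun r : ℝ => c ^ 2 * (r ^ 2 + c ^ 2) ^ (-(n : ℝ) / 2 - 1))]
  -- the radial integrand has the antiderivative `rⁿ (r² + c²)^{-n/2} / n`
  have hd : ∀ x ∈ Ici (0 : ℝ), HasDerivAt (fun r : ℝ => r ^ n * (r ^ 2 + c ^ 2) ^ (-(n : ℝ) / 2) / n)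
      (x ^ (n - 1) * (c ^ 2 * (x ^ 2 + c ^ 2) ^ (-(n : ℝ) / 2 - 1))) x := by
    intro x hx
    have hp : 0 < x ^ 2 + c ^ 2 := by positivity
    have h1 := (((hasDerivAt_pow 2 x).add_const (c ^ 2)).rpow_const (p := -(n : ℝ) / 2)
      (Or.inl hp.ne'))
    refine (((hasDerivAt_pow n x).mul h1).div_const (n : ℝ)).congr_deriv ?_
    have e1 : (x ^ 2 + c ^ 2) ^ (-(n : ℝ) / 2)
        = (x ^ 2 + c ^ 2) ^ (-(n : ℝ) / 2 - 1) * (x ^ 2 + c ^ 2) := by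
      rw [← Real.rpow_add_one hp.ne']; congr 1; ring
    have e2 : x ^ n = x ^ (n - 1) * x := by rw [← pow_succ]; congr 1; omega
    rw [e1, e2]
    field_simp
    push_cast
    ring
  have ht : Tendsto (fun r : ℝ => r ^ n * (r ^ 2 + c ^ 2) ^ (-(n : ℝ) / 2) / n) atTop
      (𝓝 (1 / n)) := by
    refine Tendsto.div_const ?_ _
    have h1 : Tendsto (fun r : ℝ => (1 + c ^ 2 / r ^ 2) ^ (-(n : ℝ) / 2)) atTop (𝓝 1) := by
      have : Tendsto (fun r : ℝ => 1 + c ^ 2 / r ^ 2) atTop (𝓝 (1 + 0)) :=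
        tendsto_const_nhds.add (tendsto_const_nhds.div_atTop (tendsto_pow_atTop two_ne_zero))
      rw [add_zero] at this
      simpa using this.rpow_const (p := -(n : ℝ) / 2) (Or.inl one_ne_zero)
    refine h1.congr' ?_
    filter_upwards [eventually_gt_atTop 0] with r hr
    have e1 : r ^ 2 + c ^ 2 = r ^ 2 * (1 + c ^ 2 / r ^ 2) := by field_simp
    have e2 : (r ^ 2) ^ (-(n : ℝ) / 2) = (r ^ n)⁻¹ := by
      rw [← Real.rpow_natCast r 2, ← Real.rpow_mul hr.le, ← Real.rpow_natCast, ← Real.rpow_neg hr.le]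
      congr 1; push_cast; ring
    rw [e1, Real.mul_rpow (by positivity) (by positivity), e2]
    field_simp
  have h := integral_Ioi_of_hasDerivAt_of_nonneg' hd (fun x hx => by
    have : (0 : ℝ) < x := hx
    positivity) ht
  simp only [finrank_euclideanSpace, Fintype.card_fin, smul_eq_mul]
  rw [h, zero_pow (by omega)]
  simp
  field_simp

lemma Dq_self (a : En n) : Dq a a = (1 - ‖a‖ ^ 2) ^ 2 := by
  rw [Dq_eq]; simp; ring

lemma aestronglyMeasurable_inK {a : En n} (ha : ‖a‖ < 1) {u : En n → En n}
    (huc : ContinuousOn u (closedBall (0 : En n) 1)) (η : ℝ) :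
    AEStronglyMeasurable (((fun z : En n => a + η • z) ⁻¹' ball 0 1).indicator
        (fun z => inK n η a z • u (a + η • z))) volume := by
  have hop : IsOpen ((fun z : En n => a + η • z) ⁻¹' ball 0 1) :=
    isOpen_ball.preimage (by fun_prop)
  rw [aestronglyMeasurable_indicator_iff hop.measurableSet]
  refine ContinuousOn.aestronglyMeasurable (fun z hz => ?_) hop.measurableSet
  have hb : a + η • z ∈ ball (0 : En n) 1 := hz
  have hz' : ‖a + η • z‖ < 1 := by simpa using hb
  have hD := Dq_pos ha hz'.le
  have hL : ContinuousAt (fun z : En n => a + η • z) z := by fun_prop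
  have c1 : ContinuousAt (fun z : En n => Dq a (a + η • z)) z :=
    ContinuousAt.comp (f := fun z : En n => a + η • z) (g := Dq a)
      (contDiff_Dq a (m := 1)).continuous.continuousAt hL
  have c2 : ContinuousAt (fun z : En n => cut (η ^ 2) (sq a (a + η • z))) z :=
    ContinuousAt.comp (f := fun z : En n => sq a (a + η • z)) (g := cut (η ^ 2))
      (continuous_cut _).continuousAt
      (ContinuousAt.comp (f := fun z : En n => a + η • z) (g := sq a)
        (contDiffAt_sq (m := 1) ha hz'.le).continuousAt hL)
  have c3 : ContinuousAt (fun z : En n => u (a + η • z)) z :=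
    ContinuousAt.comp (f := fun z : En n => a + η • z) (g := u)
      (huc.continuousAt (mem_of_superset (isOpen_ball.mem_nhds hb) ball_subset_closedBall)) hL
  have c4 : ContinuousAt (fun z : En n =>
      (Dq a (a + η • z) * (‖z‖ ^ 2 + Dq a (a + η • z))) ^ (-(n : ℝ) / 2 - 1)) z :=
    ContinuousAt.rpow_const (c1.mul ((by fun_prop : ContinuousAt (fun z : En n => ‖z‖ ^ 2) z).add c1))
      (Or.inl (by positivity))
  have c5 : ContinuousAt (fun z : En n => Dq a (a + η • z) ^ 2) z := c1.pow 2
  have c6 : ContinuousAt (fun z : En n => inK n η a z) z := by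
    unfold inK
    exact ((continuousAt_const.mul c2).mul c5).mul c4
  exact (c6.smul c3).continuousWithinAt

/-- The kernels `inT (η²) a` form an approximation of the Dirac mass at `a`, of total mass the
Lebesgue volume of the ball: after `y = a + ηz` they converge to an integrable profile. -/
lemma tendsto_interior (hn : 3 ≤ n) {a : En n} (ha : ‖a‖ < 1) {u : En n → En n}
    (huc : ContinuousOn u (closedBall (0 : En n) 1)) :
    Tendsto (fun η : ℝ => ∫ y in ball (0 : En n) 1, inT n (η ^ 2) a y • u y) (𝓝[>] 0)
      (𝓝 (volume.real (ball (0 : En n) 1) • u a)) := by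
  set c := 1 - ‖a‖ ^ 2 with hc
  have hc0 : 0 < c := q_pos ha
  obtain ⟨M, hM⟩ := (isCompact_closedBall (0 : En n) 1).exists_bound_of_continuousOn huc
  set p : ℝ := -(n : ℝ) / 2 - 1 with hp
  have hp0 : p ≤ 0 := by
    have : (0 : ℝ) ≤ n := by positivity
    rw [hp]; linarith
  set d := (1 - ‖a‖) ^ 2 with hd
  have hd0 : 0 < d := by have : 0 < 1 - ‖a‖ := by linarith
                         positivity
  have hd1 : d ≤ 1 := by
    have := norm_nonneg a
    rw [hd]; nlinarith
  -- the substitution `y = a + η z`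
  have hsub : ∀ η > (0 : ℝ), ∫ y in ball (0 : En n) 1, inT n (η ^ 2) a y • u y =
      ∫ z, ((fun z : En n => a + η • z) ⁻¹' ball 0 1).indicator
        (fun z => inK n η a z • u (a + η • z)) z := by
    intro η hη
    rw [← integral_indicator measurableSet_ball, ← integral_add_left_eq_self _ a]
    have h1 := Measure.integral_comp_smul (volume : Measure (En n))
      (fun y => (ball (0 : En n) 1).indicator (fun y => inT n (η ^ 2) a y • u y) (a + y)) η
    rw [finrank_euclideanSpace, Fintype.card_fin, abs_of_pos (by positivity)] at h1
    have h2 : (∫ y, (ball (0 : En n) 1).indicator (fun y => inT n (η ^ 2) a y • u y) (a + y)) =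
        η ^ n • ∫ z, (ball (0 : En n) 1).indicator (fun y => inT n (η ^ 2) a y • u y) (a + η • z) := by
      rw [h1, smul_smul, mul_inv_cancel₀ (by positivity), one_smul]
    rw [h2, ← integral_smul]
    refine integral_congr_ae (ae_of_all _ fun z => ?_)
    by_cases hz : a + η • z ∈ ball (0 : En n) 1
    · have hz' : z ∈ (fun z : En n => a + η • z) ⁻¹' ball 0 1 := hz
      simp only [indicator_of_mem hz, indicator_of_mem hz']
      rw [smul_smul, inT_rescale hη ha (by simpa using hz)]
    · have hz' : z ∉ (fun z : En n => a + η • z) ⁻¹' ball 0 1 := hz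
      simp only [indicator_of_notMem hz, indicator_of_notMem hz', smul_zero]
  have hmass : volume.real (ball (0 : En n) 1) • u a
      = ∫ z : En n, (c ^ 2 * (‖z‖ ^ 2 + c ^ 2) ^ p) • u a := by
    rw [integral_smul_const, integral_kernel hn hc0]
  rw [hmass]
  refine Tendsto.congr' (f₁ := fun η => ∫ z, ((fun z : En n => a + η • z) ⁻¹' ball 0 1).indicator
        (fun z => inK n η a z • u (a + η • z)) z) ?_ ?_
  · filter_upwards [self_mem_nhdsWithin] with η hη
    exact (hsub η hη).symm
  refine tendsto_integral_filter_of_dominated_convergence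
    (fun z => (16 * (d ^ 2) ^ p * M) * (1 + ‖z‖ ^ 2) ^ (-((n : ℝ) + 2) / 2)) ?_ ?_ ?_ ?_
  · filter_upwards [self_mem_nhdsWithin] with η hη
    exact aestronglyMeasurable_inK ha huc η
  · filter_upwards [self_mem_nhdsWithin] with η hη
    have hη' : (0 : ℝ) < η := hη
    refine ae_of_all _ fun z => ?_
    have hM0 : 0 ≤ M := (norm_nonneg _).trans (hM 0 (by simp))
    by_cases hz : z ∈ (fun z : En n => a + η • z) ⁻¹' ball 0 1
    · rw [indicator_of_mem hz]
      have hz' : ‖a + η • z‖ < 1 := by simpa using hz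
      have hD := Dq_pos ha hz'.le
      have hDl : d ≤ _ := Dq_lower' ha hz'.le
      have hDu := Dq_le ha hz'.le
      have huM := hM (a + η • z) (by simpa using hz'.le)
      have h1 : (Dq a (a + η • z) * (‖z‖ ^ 2 + Dq a (a + η • z))) ^ p
          ≤ (d ^ 2) ^ p * (1 + ‖z‖ ^ 2) ^ p := by
        rw [← Real.mul_rpow (by positivity) (by positivity)]
        apply Real.rpow_le_rpow_of_nonpos (by positivity) _ hp0
        calc d ^ 2 * (1 + ‖z‖ ^ 2) = d * (d * ‖z‖ ^ 2 + d) := by ring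
          _ ≤ Dq a (a + η • z) * (1 * ‖z‖ ^ 2 + Dq a (a + η • z)) := by gcongr
          _ = _ := by ring
      have hct := cut_le_one (η ^ 2) (sq a (a + η • z))
      have hct0 := cut_nonneg (η ^ 2) (sq a (a + η • z))
      have hc1 : c ^ n ≤ 1 := pow_le_one₀ hc0.le (by rw [hc]; have := sq_nonneg ‖a‖; linarith)
      have h16 : Dq a (a + η • z) ^ 2 ≤ 16 := by nlinarith
      have h0 : 0 ≤ inK n η a z := by unfold inK; positivity
      rw [norm_smul, Real.norm_of_nonneg h0]
      have h2 : inK n η a z ≤ 1 * 1 * 16 * ((d ^ 2) ^ p * (1 + ‖z‖ ^ 2) ^ p) := by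
        unfold inK
        gcongr
      calc _ ≤ (1 * 1 * 16 * ((d ^ 2) ^ p * (1 + ‖z‖ ^ 2) ^ p)) * M := by gcongr
        _ = _ := by
          rw [show -((n : ℝ) + 2) / 2 = p by rw [hp]; ring]; ring
    · rw [indicator_of_notMem hz, norm_zero]; positivity
  · exact (integrable_rpow_neg_one_add_norm_sq (by simp)).const_mul _
  · refine ae_of_all _ fun z => ?_
    have hL : Tendsto (fun η : ℝ => a + η • z) (𝓝[>] 0) (𝓝 a) := by
      have : Tendsto (fun η : ℝ => a + η • z) (𝓝 0) (𝓝 (a + (0 : ℝ) • z)) :=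
        Continuous.tendsto (by fun_prop) 0
      rw [zero_smul, add_zero] at this
      exact this.mono_left nhdsWithin_le_nhds
    have hab : a ∈ ball (0 : En n) 1 := by simpa using ha
    have t1 : Tendsto (fun η : ℝ => Dq a (a + η • z)) (𝓝[>] 0) (𝓝 (c ^ 2)) := by
      rw [hc, ← Dq_self]
      exact ((contDiff_Dq a (m := 1)).continuous.tendsto a).comp hL
    have t2 : Tendsto (fun η : ℝ => sq a (a + η • z)) (𝓝[>] 0) (𝓝 1) := by
      have : sq a a = 1 := by
        rw [sq, Dq_self, ← hc]; field_simp
      rw [← this]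
      exact ((contDiffAt_sq (m := 1) ha ha.le).continuousAt.tendsto).comp hL
    have t3 : Tendsto (fun η : ℝ => u (a + η • z)) (𝓝[>] 0) (𝓝 (u a)) :=
      ((huc.continuousAt (mem_of_superset (isOpen_ball.mem_nhds hab)
        ball_subset_closedBall)).tendsto).comp hL
    have t4 : Tendsto (fun η : ℝ => cut (η ^ 2) (sq a (a + η • z))) (𝓝[>] 0) (𝓝 1) := by
      refine tendsto_const_nhds.congr' ?_
      filter_upwards [t2.eventually (lt_mem_nhds (show (1 / 2 : ℝ) < 1 by norm_num)),
        Ioo_mem_nhdsGT (show (0 : ℝ) < 1 / 2 by norm_num)] with η h1 h2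
      refine (cut_one (pow_pos h2.1 2) ?_).symm
      nlinarith [h2.1, h2.2]
    have t5 : Tendsto (fun η : ℝ => (Dq a (a + η • z) * (‖z‖ ^ 2 + Dq a (a + η • z))) ^ p)
        (𝓝[>] 0) (𝓝 ((c ^ 2 * (‖z‖ ^ 2 + c ^ 2)) ^ p)) :=
      (t1.mul (tendsto_const_nhds.add t1)).rpow_const (Or.inl (by positivity))
    have t6 := ((((tendsto_const_nhds (x := c ^ n)).mul t4).mul (t1.pow 2)).mul t5).smul t3
    have e : c ^ n * 1 * (c ^ 2) ^ 2 * (c ^ 2 * (‖z‖ ^ 2 + c ^ 2)) ^ p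
        = c ^ 2 * (‖z‖ ^ 2 + c ^ 2) ^ p := by
      have e1 : (c ^ 2) ^ p = (c ^ (n + 2))⁻¹ := by
        rw [← Real.rpow_natCast c 2, ← Real.rpow_mul hc0.le, ← Real.rpow_natCast,
          ← Real.rpow_neg hc0.le]
        congr 1; rw [hp]; push_cast; ring
      rw [Real.mul_rpow (by positivity) (by positivity), e1]
      field_simp
      ring
    rw [e] at t6
    refine t6.congr' ?_
    filter_upwards [hL.eventually (isOpen_ball.mem_nhds hab)] with η hη
    have hη' : z ∈ (fun z : En n => a + η • z) ⁻¹' ball 0 1 := hη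
    rw [indicator_of_mem hη']
    rfl

/-! ### Polar coordinates and the derivative of the cutoff -/

/-- Integration in polar coordinates. -/
lemma polar (hn : 3 ≤ n) {F : En n → En n} (hF : Integrable F) :
    Integrable (fun ξ : sphere (0 : En n) 1 => ∫ r in Ioi (0 : ℝ), r ^ (n - 1) • F (r • (ξ : En n)))
      (volume : Measure (En n)).toSphere ∧
    ∫ y, F y = ∫ ξ : sphere (0 : En n) 1, (∫ r in Ioi (0 : ℝ), r ^ (n - 1) • F (r • (ξ : En n)))
      ∂(volume : Measure (En n)).toSphere := by
  have : Nontrivial (En n) := by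
    have : Nonempty (Fin n) := ⟨⟨0, by omega⟩⟩
    infer_instance
  have hmp := (volume : Measure (En n)).measurePreserving_homeomorphUnitSphereProd
  simp only [finrank_euclideanSpace, Fintype.card_fin] at hmp
  set G : sphere (0 : En n) 1 × Ioi (0 : ℝ) → En n := fun p => F ((p.2 : ℝ) • (p.1 : En n)) with hG
  have hcomp : ∀ x : ({0}ᶜ : Set (En n)), G (homeomorphUnitSphereProd (En n) x) = F x := by
    rintro ⟨x, hx⟩
    have hx' : ‖x‖ ≠ 0 := norm_ne_zero_iff.2 hx
    simp [hG, smul_smul, hx']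
  have hGi : Integrable G ((volume : Measure (En n)).toSphere.prod
      (Measure.volumeIoiPow (n - 1))) := by
    rw [← hmp.integrable_comp_emb (Homeomorph.measurableEmbedding _)]
    have : G ∘ (homeomorphUnitSphereProd (En n)) = F ∘ Subtype.val := funext hcomp
    rw [this, ← integrableOn_iff_comap_subtypeVal (measurableSet_singleton _).compl]
    exact hF.integrableOn
  have hinner : ∀ ξ : sphere (0 : En n) 1, ∫ r, G (ξ, r) ∂Measure.volumeIoiPow (n - 1)
      = ∫ r in Ioi (0 : ℝ), r ^ (n - 1) • F (r • (ξ : En n)) := by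
    intro ξ
    simp only [Measure.volumeIoiPow, ENNReal.ofReal, hG]
    rw [integral_withDensity_eq_integral_smul,
      integral_subtype_comap measurableSet_Ioi
        fun r : ℝ => Real.toNNReal (r ^ (n - 1)) • F (r • (ξ : En n)),
      setIntegral_congr_fun measurableSet_Ioi fun x hx => ?_]
    · rw [NNReal.smul_def, Real.coe_toNNReal _ (pow_nonneg (le_of_lt hx) _)]
    · exact (measurable_subtype_coe.pow_const _).real_toNNReal
  refine ⟨?_, ?_⟩
  · have := hGi.integral_prod_left
    simpa only [hinner] using this
  · calc ∫ y, F y = ∫ x : ({0}ᶜ : Set (En n)), F x.1 ∂(Measure.comap Subtype.val volume) := by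
          rw [integral_subtype_comap (measurableSet_singleton _).compl F, restrict_compl_singleton]
      _ = ∫ p, G p ∂((volume : Measure (En n)).toSphere.prod (Measure.volumeIoiPow (n - 1))) := by
          rw [← hmp.integral_comp (Homeomorph.measurableEmbedding _) G]
          exact integral_congr_ae (ae_of_all _ fun x => (hcomp x).symm)
      _ = _ := by
          rw [integral_prod _ hGi]
          simp only [hinner]

/-- The derivative of the smooth step. -/
def dth (x : ℝ) : ℝ := deriv Real.smoothTransition x

lemma dth_of_nonpos {x : ℝ} (hx : x ≤ 0) : dth x = 0 := by
  refine IsLocalMin.deriv_eq_zero (Filter.Eventually.of_forall fun y => ?_)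
  rw [Real.smoothTransition.zero_of_nonpos hx]
  exact Real.smoothTransition.nonneg _

lemma dth_of_one_le {x : ℝ} (hx : 1 ≤ x) : dth x = 0 := by
  refine IsLocalMax.deriv_eq_zero (Filter.Eventually.of_forall fun y => ?_)
  rw [Real.smoothTransition.one_of_one_le hx]
  exact Real.smoothTransition.le_one _

lemma hasDerivAt_step (x : ℝ) : HasDerivAt Real.smoothTransition (dth x) x :=
  ((Real.smoothTransition.contDiffAt (n := 1)).differentiableAt (by norm_num)).hasDerivAt

lemma continuous_dth : Continuous dth :=
  (Real.smoothTransition.contDiff (n := 1)).continuous_deriv (by norm_num)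

lemma dth_nonneg (x : ℝ) : 0 ≤ dth x := by
  have hm : Monotone Real.smoothTransition := Real.smoothTransition.monotone
  exact hm.deriv_nonneg

lemma exists_dth_bound : ∃ L : ℝ, ∀ x, dth x ≤ L := by
  obtain ⟨L, hL⟩ := (isCompact_Icc (a := (0 : ℝ)) (b := 1)).exists_bound_of_continuousOn
    continuous_dth.continuousOn
  have hL0 : 0 ≤ L := (norm_nonneg _).trans (hL 0 (by simp))
  refine ⟨L, fun x => ?_⟩
  rcases le_or_gt x 0 with h | h
  · rw [dth_of_nonpos h]; exact hL0
  rcases le_or_gt 1 x with h' | h'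
  · rw [dth_of_one_le h']; exact hL0
  · exact (le_abs_self _).trans (hL x ⟨h.le, h'.le⟩)

/-- The total mass of the rescaled derivative of the smooth step does not depend on its shape. -/
lemma integral_dth {b : ℝ} (hb : 0 < b) : ∫ ρ in Ioi (0 : ℝ), dth (b * ρ - 1) = b⁻¹ := by
  have hd : ∀ x ∈ Ici (0 : ℝ), HasDerivAt (fun ρ => b⁻¹ * Real.smoothTransition (b * ρ - 1))
      (dth (b * x - 1)) x := by
    intro x _
    have h1 : HasDerivAt (fun ρ : ℝ => b * ρ - 1) b x := by
      simpa using ((hasDerivAt_id x).const_mul b).sub_const 1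
    refine (((hasDerivAt_step _).comp x h1).const_mul b⁻¹).congr_deriv ?_
    field_simp
  have ht : Tendsto (fun ρ => b⁻¹ * Real.smoothTransition (b * ρ - 1)) atTop (𝓝 b⁻¹) := by
    refine tendsto_const_nhds.congr' ?_
    filter_upwards [eventually_ge_atTop (2 / b)] with ρ hρ
    rw [Real.smoothTransition.one_of_one_le, mul_one]
    rw [div_le_iff₀ hb] at hρ
    linarith
  rw [integral_Ioi_of_hasDerivAt_of_nonneg' hd (fun x _ => dth_nonneg _) ht]
  simp [Real.smoothTransition.zero_of_nonpos]

/-! ### The boundary layer kernel -/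

/-- The part of `divB` that concentrates on the unit sphere, multiplied by `ε`. -/
def bdT (n : ℕ) (ε : ℝ) (a y : En n) : ℝ :=
  2 * (1 - ‖a‖ ^ 2) ^ n / n * dth (sq a y / ε - 1) * (‖y - a‖ ^ 2 / Dq a y)
    * (Rq ε a y) ^ (-(n : ℝ) / 2)

lemma divB_eq (n : ℕ) (ε : ℝ) (a y : En n) :
    divB n ε a y = ε⁻¹ * bdT n ε a y - inT n ε a y := by
  unfold divB bdT inT dth
  ring

lemma continuousOn_Rq_rpow {a : En n} (ha : ‖a‖ < 1) {ε : ℝ} (hε : 0 < ε) (p : ℝ) :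
    ContinuousOn (fun y => (Rq ε a y) ^ p) (closedBall 0 1) := by
  refine ContinuousOn.rpow_const (contDiff_Rq ε a (m := 1)).continuous.continuousOn fun y hy => ?_
  exact Or.inl (Rq_pos ha (by simpa using hy) hε).ne'

lemma continuousOn_sq {a : En n} (ha : ‖a‖ < 1) : ContinuousOn (sq a) (closedBall 0 1) :=
  fun y hy => (contDiffAt_sq (m := 1) ha
    (by simpa using hy : ‖y‖ ≤ 1)).continuousAt.continuousWithinAt

lemma continuousOn_inT {a : En n} (ha : ‖a‖ < 1) {ε : ℝ} (hε : 0 < ε) :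
    ContinuousOn (inT n ε a) (closedBall 0 1) := by
  have h1 : ContinuousOn (fun y => cut ε (sq a y)) (closedBall 0 1) :=
    (continuous_cut ε).comp_continuousOn (continuousOn_sq ha)
  have h2 := continuousOn_Rq_rpow ha hε (-(n : ℝ) / 2 - 1)
  have h3 : ContinuousOn (fun y => Dq a y ^ 2) (closedBall 0 1) :=
    ((contDiff_Dq a (m := 1)).continuous.pow 2).continuousOn
  unfold inT
  exact ((continuousOn_const.mul h1).mul h3).mul h2

lemma continuousOn_bdT {a : En n} (ha : ‖a‖ < 1) {ε : ℝ} (hε : 0 < ε) :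
    ContinuousOn (bdT n ε a) (closedBall 0 1) := by
  have h1 : ContinuousOn (fun y => dth (sq a y / ε - 1)) (closedBall 0 1) :=
    continuous_dth.comp_continuousOn (((continuousOn_sq ha).div_const ε).sub continuousOn_const)
  have h2 := continuousOn_Rq_rpow ha hε (-(n : ℝ) / 2)
  have h3 : ContinuousOn (fun y => ‖y - a‖ ^ 2 / Dq a y) (closedBall 0 1) :=
    ContinuousOn.div (by fun_prop) (contDiff_Dq a (m := 1)).continuous.continuousOn
      fun y hy => (Dq_pos ha (by simpa using hy)).ne'
  unfold bdT
  exact ((continuousOn_const.mul h1).mul h3).mul h2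

lemma integrableOn_smul_u {f : En n → ℝ} (hf : ContinuousOn f (closedBall 0 1)) {u : En n → En n}
    (huc : ContinuousOn u (closedBall (0 : En n) 1)) :
    IntegrableOn (fun y => f y • u y) (ball 0 1) :=
  ((hf.smul huc).integrableOn_compact (isCompact_closedBall _ _)).mono_set ball_subset_closedBall

/-- The boundary layer kernel is bounded uniformly in `ε` and vanishes at distance more than a
multiple of `ε` from the sphere. -/
lemma bdT_bound {a : En n} (ha : ‖a‖ < 1) :
    ∃ C : ℝ, 0 ≤ C ∧ ∀ ε > 0, ε < 1 / 4 → ∀ y : En n, ‖y‖ < 1 →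
      0 ≤ bdT n ε a y ∧ bdT n ε a y ≤ C ∧
      (8 / (1 - ‖a‖ ^ 2) * ε < 1 - ‖y‖ → bdT n ε a y = 0) := by
  obtain ⟨L, hL⟩ := exists_dth_bound
  have hL0 : 0 ≤ L := (dth_nonneg 0).trans (hL 0)
  set c := 1 - ‖a‖ ^ 2 with hc
  have hc0 : 0 < c := q_pos ha
  set d := (1 - ‖a‖) ^ 2 with hd
  have hd0 : 0 < d := by have : 0 < 1 - ‖a‖ := by linarith
                         positivity
  refine ⟨2 * c ^ n / n * L * 1 * (d ^ 2 / 2) ^ (-(n : ℝ) / 2), by positivity, ?_⟩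
  intro ε hε hε4 y hy
  have hD := Dq_pos ha hy.le
  have hDl : d ≤ _ := Dq_lower' ha hy.le
  have hDu := Dq_le ha hy.le
  have hR := Rq_pos ha hy.le hε
  have hθ := dth_nonneg (sq a y / ε - 1)
  have hbd : bdT n ε a y = 2 * c ^ n / n * dth (sq a y / ε - 1) * (‖y - a‖ ^ 2 / Dq a y)
    * (Rq ε a y) ^ (-(n : ℝ) / 2) := rfl
  have hzero : 2 * ε ≤ sq a y → bdT n ε a y = 0 := by
    intro h
    have : 1 ≤ sq a y / ε - 1 := by
      have := (le_div_iff₀ hε).2 h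
      linarith
    rw [hbd, dth_of_one_le this]; simp
  have h0 : 0 ≤ bdT n ε a y := by rw [hbd]; positivity
  refine ⟨h0, ?_, ?_⟩
  · rcases le_or_gt (2 * ε) (sq a y) with h | h
    · rw [hzero h]; positivity
    · have hs := one_sub_sq hD.ne'
      have hND : ‖y - a‖ ^ 2 / Dq a y ≤ 1 := by
        rw [← hs]; linarith [sq_pos ha hy]
      have hN : Dq a y / 2 ≤ ‖y - a‖ ^ 2 := by
        have : 1 / 2 ≤ ‖y - a‖ ^ 2 / Dq a y := by rw [← hs]; linarith
        rw [le_div_iff₀ hD] at this; linarith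
      have hRl : d ^ 2 / 2 ≤ Rq ε a y := by
        unfold Rq
        calc d ^ 2 / 2 = d * (d / 2) := by ring
          _ ≤ Dq a y * (Dq a y / 2) := by gcongr
          _ ≤ _ := by
            have : 0 ≤ ε * Dq a y := by positivity
            gcongr; linarith
      have hRp : Rq ε a y ^ (-(n : ℝ) / 2) ≤ (d ^ 2 / 2) ^ (-(n : ℝ) / 2) := by
        apply Real.rpow_le_rpow_of_nonpos (by positivity) hRl
        have : (0 : ℝ) ≤ n := by positivity
        linarith
      have hLL := hL (sq a y / ε - 1)
      rw [hbd]
      gcongr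
  · intro h
    apply hzero
    have h1 : 8 * ε < (1 - ‖y‖) * c := by
      rw [div_mul_eq_mul_div, div_lt_iff₀ hc0] at h; exact h
    have hy0 := norm_nonneg y
    rw [sq, le_div_iff₀ hD]
    calc 2 * ε * Dq a y ≤ 2 * ε * 4 := by gcongr
      _ = 8 * ε := by ring
      _ ≤ (1 - ‖y‖) * c := h1.le
      _ ≤ c * (1 - ‖y‖ ^ 2) := by
        rw [mul_comm]
        gcongr
        nlinarith

/-- The radial integrand of the boundary layer on the ray through `ξ`, in the rescaled variable
`ρ = (1 - r)/ε`; it is extended by zero outside `0 < ρ < 1/ε`. -/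
def bdK (n : ℕ) (ε : ℝ) (a : En n) (u : En n → En n) (ξ : En n) : ℝ → En n :=
  (Ioo (0 : ℝ) ε⁻¹).indicator fun ρ =>
    ((1 - ε * ρ) ^ (n - 1) * bdT n ε a ((1 - ε * ρ) • ξ)) • u ((1 - ε * ρ) • ξ)

/-- The substitution `r = 1 - ερ`; the Jacobian `ε` absorbs the factor `ε⁻¹`. -/
lemma radial_rescale {a : En n} (u : En n → En n) {ε : ℝ} (hε : 0 < ε) {ξ : En n} (hξ : ‖ξ‖ = 1) :
    ∫ r in Ioi (0 : ℝ), r ^ (n - 1) •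
      (ball (0 : En n) 1).indicator (fun y => (ε⁻¹ * bdT n ε a y) • u y) (r • ξ)
      = ∫ ρ, bdK n ε a u ξ ρ := by
  rw [← integral_indicator measurableSet_Ioi, ← integral_sub_left_eq_self _ _ (1 : ℝ)]
  set h : ℝ → En n := (Ioi (0 : ℝ)).indicator fun r => r ^ (n - 1) •
      (ball (0 : En n) 1).indicator (fun y => (ε⁻¹ * bdT n ε a y) • u y) (r • ξ) with hh
  have h1 := Measure.integral_comp_mul_left (fun t => h (1 - t)) ε
  have h2 : ∫ t, h (1 - t) = ε • ∫ ρ, h (1 - ε * ρ) := by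
    rw [h1, abs_of_pos (by positivity), smul_smul, mul_inv_cancel₀ hε.ne', one_smul]
  rw [h2, ← integral_smul]
  refine integral_congr_ae (ae_of_all _ fun ρ => ?_)
  simp only [hh, bdK]
  by_cases hρ : ρ ∈ Ioo (0 : ℝ) ε⁻¹
  · have e1 : ε * ρ < 1 := by
      have := mul_lt_mul_of_pos_left hρ.2 hε
      rwa [mul_inv_cancel₀ hε.ne'] at this
    have e2 : 0 < ε * ρ := mul_pos hε hρ.1
    have m1 : 1 - ε * ρ ∈ Ioi (0 : ℝ) := by simpa using e1
    have m2 : (1 - ε * ρ) • ξ ∈ ball (0 : En n) 1 := by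
      rw [mem_ball_zero_iff, norm_smul, hξ, Real.norm_of_nonneg (by linarith)]; linarith
    rw [indicator_of_mem m1, indicator_of_mem m2, indicator_of_mem hρ, smul_smul, smul_smul]
    congr 1; field_simp
  · rw [indicator_of_notMem hρ]
    by_cases m1 : 1 - ε * ρ ∈ Ioi (0 : ℝ)
    · have e1 : ε * ρ < 1 := by simpa using m1
      have m2 : (1 - ε * ρ) • ξ ∉ ball (0 : En n) 1 := by
        rw [mem_ball_zero_iff, norm_smul, hξ, Real.norm_of_nonneg (by linarith)]
        intro e2
        apply hρ
        refine ⟨pos_of_mul_pos_right (a := ε) (by linarith) hε.le, ?_⟩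
        rw [← one_div, lt_div_iff₀ hε]; linarith
      rw [indicator_of_mem m1, indicator_of_notMem m2, smul_zero, smul_zero]
    · rw [indicator_of_notMem m1, smul_zero]

/-! ### Convergence to the Poisson integral and the representation formula -/

lemma norm_path {ξ : En n} (hξ : ‖ξ‖ = 1) {ε ρ : ℝ} (hε : 0 < ε) (hρ : ρ ∈ Ioo (0 : ℝ) ε⁻¹) :
    0 < 1 - ε * ρ ∧ 1 - ε * ρ < 1 ∧ ‖(1 - ε * ρ) • ξ‖ = 1 - ε * ρ := by
  have e1 : ε * ρ < 1 := by
    have := mul_lt_mul_of_pos_left hρ.2 hε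
    rwa [mul_inv_cancel₀ hε.ne'] at this
  have e2 : 0 < ε * ρ := mul_pos hε hρ.1
  refine ⟨by linarith, by linarith, ?_⟩
  rw [norm_smul, hξ, Real.norm_of_nonneg (by linarith), mul_one]

/-- The boundary layer kernel along a ray, in the rescaled distance `ρ = (1 - |y|)/ε`. -/
lemma tendsto_bdT {a : En n} (ha : ‖a‖ < 1) {ξ : En n} (hξ : ‖ξ‖ = 1) {ρ : ℝ} :
    Tendsto (fun ε => bdT n ε a ((1 - ε * ρ) • ξ)) (𝓝[>] 0)
      (𝓝 (2 * (1 - ‖a‖ ^ 2) ^ n / n * dth (2 * (1 - ‖a‖ ^ 2) / ‖ξ - a‖ ^ 2 * ρ - 1)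
        * ((‖ξ - a‖ ^ 2) ^ n)⁻¹)) := by
  have hNp : 0 < ‖ξ - a‖ ^ 2 := by
    have : ξ ≠ a := by rintro rfl; linarith
    have := norm_pos_iff.2 (sub_ne_zero.2 this)
    positivity
  have hDN : Dq a ξ = ‖ξ - a‖ ^ 2 := by rw [Dq_eq, hξ]; ring
  have hp : Tendsto (fun ε : ℝ => (1 - ε * ρ) • ξ) (𝓝[>] 0) (𝓝 ξ) := by
    have : Continuous fun ε : ℝ => (1 - ε * ρ) • ξ := by fun_prop
    simpa using (this.tendsto 0).mono_left nhdsWithin_le_nhds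
  have hid : Tendsto (fun ε : ℝ => ε) (𝓝[>] 0) (𝓝 0) := nhdsWithin_le_nhds
  have hD : Tendsto (fun ε : ℝ => Dq a ((1 - ε * ρ) • ξ)) (𝓝[>] 0) (𝓝 (‖ξ - a‖ ^ 2)) := by
    rw [← hDN]
    exact ((contDiff_Dq a (m := 1)).continuous.tendsto ξ).comp hp
  have hN : Tendsto (fun ε : ℝ => ‖(1 - ε * ρ) • ξ - a‖ ^ 2) (𝓝[>] 0) (𝓝 (‖ξ - a‖ ^ 2)) :=
    ((hp.sub_const a).norm).pow 2
  have hR : Tendsto (fun ε : ℝ => Rq ε a ((1 - ε * ρ) • ξ)) (𝓝[>] 0)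
      (𝓝 (‖ξ - a‖ ^ 2 * (‖ξ - a‖ ^ 2 + 0 * ‖ξ - a‖ ^ 2))) :=
    hD.mul (hN.add (hid.mul hD))
  have hRp := hR.rpow_const (p := -(n : ℝ) / 2)
    (Or.inl (by rw [zero_mul, add_zero]; positivity))
  have hs : Tendsto (fun ε : ℝ => sq a ((1 - ε * ρ) • ξ) / ε) (𝓝[>] 0)
      (𝓝 (2 * (1 - ‖a‖ ^ 2) / ‖ξ - a‖ ^ 2 * ρ)) := by
    have h1 : Tendsto (fun ε : ℝ => (1 - ‖a‖ ^ 2) * (ρ * (2 - ε * ρ)) / Dq a ((1 - ε * ρ) • ξ))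
        (𝓝[>] 0) (𝓝 ((1 - ‖a‖ ^ 2) * (ρ * (2 - 0 * ρ)) / ‖ξ - a‖ ^ 2)) :=
      (((hid.mul_const ρ).const_sub 2).const_mul ρ |>.const_mul _).div hD hNp.ne'
    have e : (1 - ‖a‖ ^ 2) * (ρ * (2 - 0 * ρ)) / ‖ξ - a‖ ^ 2
        = 2 * (1 - ‖a‖ ^ 2) / ‖ξ - a‖ ^ 2 * ρ := by ring
    rw [← e]
    refine h1.congr' ?_
    filter_upwards [self_mem_nhdsWithin] with ε hε
    have hε : 0 < ε := hε
    rw [sq, norm_smul, hξ, mul_one, Real.norm_eq_abs, sq_abs, div_div, mul_comm (Dq _ _),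
      ← div_div]
    congr 1
    field_simp
    ring
  have hθ := (continuous_dth.tendsto _).comp (hs.sub_const 1)
  have := ((hθ.const_mul (2 * (1 - ‖a‖ ^ 2) ^ n / n)).mul (hN.div hD hNp.ne')).mul hRp
  have e : (‖ξ - a‖ ^ 2 * (‖ξ - a‖ ^ 2 + 0 * ‖ξ - a‖ ^ 2)) ^ (-(n : ℝ) / 2)
      = ((‖ξ - a‖ ^ 2) ^ n)⁻¹ := by
    rw [zero_mul, add_zero, ← pow_two, ← Real.rpow_natCast (_ ^ 2) 2, ← Real.rpow_mul hNp.le,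
      ← Real.rpow_natCast _ n, ← Real.rpow_neg hNp.le]
    congr 1
    push_cast; ring
  rw [e, div_self hNp.ne', mul_one] at this
  exact this

/-- Uniform majorant for the rescaled radial integrand. -/
lemma norm_bdK_le {a : En n} (ha : ‖a‖ < 1) {u : En n → En n} {C M : ℝ} (hC : 0 ≤ C)
    (hM : ∀ x ∈ closedBall (0 : En n) 1, ‖u x‖ ≤ M) {ε : ℝ} (hε : 0 < ε)
    (hb : ∀ y : En n, ‖y‖ < 1 → 0 ≤ bdT n ε a y ∧ bdT n ε a y ≤ C ∧
      (8 / (1 - ‖a‖ ^ 2) * ε < 1 - ‖y‖ → bdT n ε a y = 0))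
    {ξ : En n} (hξ : ‖ξ‖ = 1) (ρ : ℝ) :
    ‖bdK n ε a u ξ ρ‖ ≤ (Ioc 0 (8 / (1 - ‖a‖ ^ 2))).indicator (fun _ => C * M) ρ := by
  have hM0 : 0 ≤ M := (norm_nonneg _).trans (hM 0 (by simp))
  have hCM : ∀ x, 0 ≤ (Ioc 0 (8 / (1 - ‖a‖ ^ 2))).indicator (fun _ => C * M) x :=
    fun x => indicator_nonneg (fun _ _ => by positivity) x
  by_cases hρ : ρ ∈ Ioo (0 : ℝ) ε⁻¹
  · obtain ⟨p1, p2, p3⟩ := norm_path hξ hε hρ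
    obtain ⟨b1, b2, b3⟩ := hb ((1 - ε * ρ) • ξ) (by linarith)
    rw [bdK, indicator_of_mem hρ]
    rcases le_or_gt ρ (8 / (1 - ‖a‖ ^ 2)) with h | h
    · rw [indicator_of_mem (by exact ⟨hρ.1, h⟩), norm_smul,
        Real.norm_of_nonneg (by positivity)]
      have h1 : (1 - ε * ρ) ^ (n - 1) ≤ 1 := pow_le_one₀ p1.le p2.le
      have h2 := hM ((1 - ε * ρ) • ξ) (by rw [mem_closedBall_zero_iff]; linarith)
      calc _ ≤ 1 * C * M := by gcongr
        _ = C * M := by ring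
    · rw [b3 (by rw [p3]; nlinarith)]
      simpa using hCM ρ
  · rw [bdK, indicator_of_notMem hρ, norm_zero]; exact hCM ρ

lemma aestronglyMeasurable_bdK {a : En n} (ha : ‖a‖ < 1) {u : En n → En n}
    (huc : ContinuousOn u (closedBall (0 : En n) 1)) {ε : ℝ} (hε : 0 < ε) {ξ : En n}
    (hξ : ‖ξ‖ = 1) : AEStronglyMeasurable (bdK n ε a u ξ) volume := by
  unfold bdK
  rw [aestronglyMeasurable_indicator_iff measurableSet_Ioo]
  refine ContinuousOn.aestronglyMeasurable ?_ measurableSet_Ioo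
  have hp : ContinuousOn (fun ρ : ℝ => (1 - ε * ρ) • ξ) (Ioo (0 : ℝ) ε⁻¹) := by fun_prop
  have hm : MapsTo (fun ρ : ℝ => (1 - ε * ρ) • ξ) (Ioo (0 : ℝ) ε⁻¹) (closedBall 0 1) := by
    intro ρ hρ
    obtain ⟨p1, p2, p3⟩ := norm_path hξ hε hρ
    rw [mem_closedBall_zero_iff]; linarith
  have h1 := (continuousOn_bdT (n := n) ha hε).comp hp hm
  have h2 := huc.comp hp hm
  have h3 : ContinuousOn (fun ρ : ℝ => (1 - ε * ρ) ^ (n - 1)) (Ioo (0 : ℝ) ε⁻¹) := by fun_prop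
  exact (h3.mul h1).smul h2

/-- On each ray the boundary layer converges to the Poisson–Szegő kernel times the boundary value,
up to the factor `1/n`. -/
lemma tendsto_bdK (hn : 3 ≤ n) {a : En n} (ha : ‖a‖ < 1) {u : En n → En n}
    (huc : ContinuousOn u (closedBall (0 : En n) 1)) {ξ : En n} (hξ : ‖ξ‖ = 1) :
    Tendsto (fun ε => ∫ ρ, bdK n ε a u ξ ρ) (𝓝[>] 0)
      (𝓝 ((1 / (n : ℝ) * ((1 - ‖a‖ ^ 2) / ‖ξ - a‖ ^ 2) ^ (n - 1)) • u ξ)) := by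
  have hc0 : 0 < 1 - ‖a‖ ^ 2 := q_pos ha
  have hNp : 0 < ‖ξ - a‖ ^ 2 := by
    have : ξ ≠ a := by rintro rfl; linarith
    have := norm_pos_iff.2 (sub_ne_zero.2 this)
    positivity
  obtain ⟨M, hM⟩ := (isCompact_closedBall (0 : En n) 1).exists_bound_of_continuousOn huc
  obtain ⟨C, hC, hb⟩ := bdT_bound (n := n) ha
  have hlim : ∫ ρ, (Ioi (0 : ℝ)).indicator (fun ρ => (2 * (1 - ‖a‖ ^ 2) ^ n / n
        * dth (2 * (1 - ‖a‖ ^ 2) / ‖ξ - a‖ ^ 2 * ρ - 1) * ((‖ξ - a‖ ^ 2) ^ n)⁻¹) • u ξ) ρ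
      = (1 / (n : ℝ) * ((1 - ‖a‖ ^ 2) / ‖ξ - a‖ ^ 2) ^ (n - 1)) • u ξ := by
    rw [integral_indicator measurableSet_Ioi, integral_smul_const, integral_mul_const,
      integral_const_mul, integral_dth (by positivity)]
    congr 1
    obtain ⟨m, rfl⟩ : ∃ m, n = m + 1 := ⟨n - 1, by omega⟩
    have : ((m + 1 : ℕ) : ℝ) ≠ 0 := by positivity
    rw [Nat.add_sub_cancel, div_pow, pow_succ, pow_succ]
    field_simp
    ring
  rw [← hlim]
  have hsmall : ∀ᶠ ε : ℝ in 𝓝[>] 0, 0 < ε ∧ ε < 1 / 4 :=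
    Ioo_mem_nhdsGT (by norm_num : (0 : ℝ) < 1 / 4)
  refine tendsto_integral_filter_of_dominated_convergence
    ((Ioc 0 (8 / (1 - ‖a‖ ^ 2))).indicator fun _ => C * M) ?_ ?_ ?_ ?_
  · filter_upwards [hsmall] with ε hε using aestronglyMeasurable_bdK ha huc hε.1 hξ
  · filter_upwards [hsmall] with ε hε
    exact ae_of_all _ fun ρ => norm_bdK_le ha hC hM hε.1 (hb ε hε.1 hε.2) hξ ρ
  · rw [integrable_indicator_iff measurableSet_Ioc]
    exact integrableOn_const (by simp)
  · refine ae_of_all _ fun ρ => ?_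
    by_cases hρ : ρ ∈ Ioi (0 : ℝ)
    · rw [indicator_of_mem hρ]
      have hρ0 : 0 < ρ := hρ
      have hρe : ∀ᶠ ε : ℝ in 𝓝[>] 0, 0 < ε ∧ ε < ρ⁻¹ := Ioo_mem_nhdsGT (by positivity)
      have hmem : ∀ᶠ ε : ℝ in 𝓝[>] 0, 0 < ε ∧ ρ ∈ Ioo (0 : ℝ) ε⁻¹ := by
        filter_upwards [hρe] with ε hε
        exact ⟨hε.1, hρ0, (lt_inv_comm₀ hε.1 hρ0).1 hε.2⟩
      have hp : Tendsto (fun ε : ℝ => (1 - ε * ρ) • ξ) (𝓝[>] 0) (𝓝[closedBall 0 1] ξ) := by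
        refine tendsto_nhdsWithin_iff.2 ⟨?_, ?_⟩
        · have : Continuous fun ε : ℝ => (1 - ε * ρ) • ξ := by fun_prop
          simpa using (this.tendsto 0).mono_left nhdsWithin_le_nhds
        · filter_upwards [hmem] with ε hε
          obtain ⟨p1, p2, p3⟩ := norm_path hξ hε.1 hε.2
          rw [mem_closedBall_zero_iff]; linarith
      have hu : Tendsto (fun ε : ℝ => u ((1 - ε * ρ) • ξ)) (𝓝[>] 0) (𝓝 (u ξ)) :=
        Tendsto.comp (huc ξ (by simp [hξ])) hp
      have hpow : Tendsto (fun ε : ℝ => (1 - ε * ρ) ^ (n - 1)) (𝓝[>] 0) (𝓝 1) := by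
        have : Continuous fun ε : ℝ => (1 - ε * ρ) ^ (n - 1) := by fun_prop
        simpa using (this.tendsto 0).mono_left nhdsWithin_le_nhds
      have := (hpow.mul (tendsto_bdT (n := n) ha hξ (ρ := ρ))).smul hu
      rw [one_mul] at this
      refine this.congr' ?_
      filter_upwards [hmem] with ε hε
      rw [bdK, indicator_of_mem hε.2]
    · rw [indicator_of_notMem hρ]
      refine tendsto_const_nhds.congr fun ε => ?_
      rw [bdK, indicator_of_notMem fun h => hρ h.1]

/-- The boundary layer integral converges to a Poisson integral over the sphere. -/
lemma tendsto_boundary (hn : 3 ≤ n) {a : En n} (ha : ‖a‖ < 1) {u : En n → En n}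
    (huc : ContinuousOn u (closedBall (0 : En n) 1)) :
    Tendsto (fun ε => ∫ y in ball (0 : En n) 1, (ε⁻¹ * bdT n ε a y) • u y) (𝓝[>] 0)
      (𝓝 (∫ ξ : sphere (0 : En n) 1, ((1 / (n : ℝ)) * Ph n a ξ) • u ξ
        ∂(volume : Measure (En n)).toSphere)) := by
  obtain ⟨M, hM⟩ := (isCompact_closedBall (0 : En n) 1).exists_bound_of_continuousOn huc
  obtain ⟨C, hC, hb⟩ := bdT_bound (n := n) ha
  have hξ : ∀ ξ : sphere (0 : En n) 1, ‖(ξ : En n)‖ = 1 := fun ξ => by simp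
  have hsmall : ∀ᶠ ε : ℝ in 𝓝[>] 0, 0 < ε ∧ ε < 1 / 4 :=
    Ioo_mem_nhdsGT (by norm_num : (0 : ℝ) < 1 / 4)
  have hpol : ∀ ε : ℝ, 0 < ε →
      Integrable (fun ξ : sphere (0 : En n) 1 => ∫ ρ, bdK n ε a u ξ ρ)
        (volume : Measure (En n)).toSphere ∧
      ∫ y in ball (0 : En n) 1, (ε⁻¹ * bdT n ε a y) • u y
        = ∫ ξ : sphere (0 : En n) 1, (∫ ρ, bdK n ε a u ξ ρ)
          ∂(volume : Measure (En n)).toSphere := by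
    intro ε hε
    have hF : Integrable ((ball (0 : En n) 1).indicator
        (fun y => (ε⁻¹ * bdT n ε a y) • u y)) := by
      rw [integrable_indicator_iff measurableSet_ball]
      exact integrableOn_smul_u (continuousOn_const.mul (continuousOn_bdT ha hε)) huc
    have h := polar hn hF
    simp only [radial_rescale u hε (hξ _)] at h
    rwa [integral_indicator measurableSet_ball] at h
  have hmain : Tendsto (fun ε => ∫ ξ : sphere (0 : En n) 1, (∫ ρ, bdK n ε a u ξ ρ)
      ∂(volume : Measure (En n)).toSphere) (𝓝[>] 0)
      (𝓝 (∫ ξ : sphere (0 : En n) 1, ((1 / (n : ℝ)) * Ph n a ξ) • u ξ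
        ∂(volume : Measure (En n)).toSphere)) := by
    refine tendsto_integral_filter_of_dominated_convergence
      (fun _ => ∫ ρ, (Ioc 0 (8 / (1 - ‖a‖ ^ 2))).indicator (fun _ => C * M) ρ) ?_ ?_ ?_ ?_
    · filter_upwards [hsmall] with ε hε using (hpol ε hε.1).1.aestronglyMeasurable
    · filter_upwards [hsmall] with ε hε
      refine ae_of_all _ fun ξ => norm_integral_le_of_norm_le ?_ (ae_of_all _ fun ρ =>
        norm_bdK_le ha hC hM hε.1 (hb ε hε.1 hε.2) (hξ ξ) ρ)
      rw [integrable_indicator_iff measurableSet_Ioc]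
      exact integrableOn_const (by simp)
    · exact integrable_const _
    · exact ae_of_all _ fun ξ => tendsto_bdK hn ha huc (hξ ξ)
  refine hmain.congr' ?_
  filter_upwards [self_mem_nhdsWithin] with ε hε using ((hpol ε hε).2).symm

/-- The Poisson integral with respect to the unnormalised surface measure, whose total mass is `n`
times the volume of the ball. -/
lemma PhInt_eq (hn : 3 ≤ n) (u : En n → En n) (a : En n) :
    PhInt n u a = ((volume (ball (0 : En n) 1))⁻¹).toReal •
      ∫ ξ : sphere (0 : En n) 1, ((1 / (n : ℝ)) * Ph n a ξ) • u ξ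
        ∂(volume : Measure (En n)).toSphere := by
  rw [PhInt, sigmaMeasure, integral_smul_measure, Measure.toSphere_apply_univ]
  simp only [mul_smul, integral_smul]
  rw [smul_smul]
  congr 1
  rw [finrank_euclideanSpace, Fintype.card_fin, ENNReal.toReal_inv, ENNReal.toReal_mul,
    ENNReal.toReal_inv, ENNReal.toReal_natCast, mul_inv, one_div, mul_comm]

lemma continuousOn_hypLap {u : En n → En n} (hu2 : ContDiffOn ℝ 2 u (ball (0 : En n) 1)) :
    ContinuousOn (hypLap n u) (ball 0 1) := by
  intro y hy
  have hy' : ‖y‖ < 1 := by simpa using hy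
  refine ContinuousAt.continuousWithinAt ?_
  have hg : ∀ i, ContinuousAt (fun y => fderiv ℝ u y (basisE n i)) y :=
    fun i => (contDiffAt_fderiv hu2 hy' _).continuousAt
  have hl : ∀ i, ContinuousAt
      (fun y => fderiv ℝ (fun z => fderiv ℝ u z (basisE n i)) y (basisE n i)) y := fun i =>
    ((contDiffAt_fderiv hu2 hy' (basisE n i)).fderiv_right (m := 0) (by norm_num)).continuousAt.clm_apply
      continuousAt_const
  have hc : ∀ i, ContinuousAt (fun y : En n => y i) y := fun i => by fun_prop
  have hl' : ContinuousAt (lap u) y := tendsto_finsetSum _ fun i _ => hl i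
  have hg' : ContinuousAt (fun y => ∑ i : Fin n, y i • fderiv ℝ u y (basisE n i)) y :=
    tendsto_finsetSum _ fun i _ => (hc i).smul (hg i)
  have h1 : ContinuousAt (fun y : En n => (1 - ‖y‖ ^ 2) ^ 2) y := by fun_prop
  have h2 : ContinuousAt (fun y : En n => 2 * ((n : ℝ) - 2) * (1 - ‖y‖ ^ 2)) y := by fun_prop
  exact (h1.smul hl').add (h2.smul hg')

/-- Green's identity with the divergence split into its two concentrating parts. -/
lemma green_split (hn : 3 ≤ n) {a : En n} (ha : ‖a‖ < 1) {ε : ℝ} (hε : 0 < ε)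
    {u ψ : En n → En n} (hu2 : ContDiffOn ℝ 2 u (ball (0 : En n) 1))
    (huc : ContinuousOn u (closedBall (0 : En n) 1))
    (heq : ∀ x ∈ ball (0 : En n) 1, hypLap n u x = ψ x) :
    ∫ y in ball (0 : En n) 1, (Hh n ε (sq a y) * ((1 - ‖y‖ ^ 2) ^ n)⁻¹) • ψ y
      = (∫ y in ball (0 : En n) 1, (ε⁻¹ * bdT n ε a y) • u y)
        - ∫ y in ball (0 : En n) 1, inT n ε a y • u y := by
  obtain ⟨h1, h2⟩ := green_identity hn ha hε hu2
  have i1 : IntegrableOn (fun y => (ε⁻¹ * bdT n ε a y) • u y) (ball 0 1) :=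
    integrableOn_smul_u (continuousOn_const.mul (continuousOn_bdT ha hε)) huc
  have i2 : IntegrableOn (fun y => inT n ε a y • u y) (ball 0 1) :=
    integrableOn_smul_u (continuousOn_inT ha hε) huc
  have e : ∀ y, divB n ε a y • u y = (ε⁻¹ * bdT n ε a y) • u y - inT n ε a y • u y := fun y => by
    rw [divB_eq, sub_smul]
  simp only [e] at h1 h2
  have i4 : IntegrableOn (fun y => (ε⁻¹ * bdT n ε a y) • u y - inT n ε a y • u y) (ball 0 1) :=
    i1.sub i2
  have i3 : IntegrableOn (fun y => (Hh n ε (sq a y) * ((1 - ‖y‖ ^ 2) ^ n)⁻¹) • hypLap n u y)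
      (ball 0 1) := by
    refine (h1.add i4).congr (ae_of_all _ fun y => ?_)
    simp
  rw [integral_sub i3 i4, integral_sub i1 i2, sub_eq_zero] at h2
  rw [← h2]
  refine setIntegral_congr_fun measurableSet_ball fun y hy => ?_
  simp only [heq y hy]

/-- The representation formula with the boundary values written as `u` itself, obtained by letting
`ε = η² → 0` in `green_split`. -/
lemma representation (hn : 3 ≤ n) {u ψ : En n → En n}
    (hu2 : ContDiffOn ℝ 2 u (ball (0 : En n) 1))
    (huc : ContinuousOn u (closedBall (0 : En n) 1))
    (hψb : ∃ K : ℝ, ∀ x ∈ ball (0 : En n) 1, ‖ψ x‖ ≤ K)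
    (heq : ∀ x ∈ ball (0 : En n) 1, hypLap n u x = ψ x)
    (hint : ∫⁻ x in ball (0 : En n) 1,
        ENNReal.ofReal ((1 - ‖x‖ ^ 2) ^ (n - 1) * ‖ψ x‖) ∂(tauMeasure n) < ⊤)
    {a : En n} (ha : ‖a‖ < 1) : u a = PhInt n u a - GhInt n ψ a := by
  have hm : AEStronglyMeasurable ψ (volume.restrict (ball 0 1)) :=
    ((continuousOn_hypLap hu2).congr fun x hx => (heq x hx).symm).aestronglyMeasurable
      measurableSet_ball
  have hη : Tendsto (fun η : ℝ => η ^ 2) (𝓝[>] 0) (𝓝[>] 0) := by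
    refine tendsto_nhdsWithin_iff.2 ⟨?_, ?_⟩
    · have : Continuous fun η : ℝ => η ^ 2 := by fun_prop
      simpa using (this.tendsto 0).mono_left nhdsWithin_le_nhds
    · filter_upwards [self_mem_nhdsWithin] with η hη
      have : 0 < η := hη
      exact pow_pos this 2
  have t1 := (tendsto_green hn ha hm hψb hint).comp hη
  have t2 := ((tendsto_boundary hn ha huc).comp hη).sub (tendsto_interior hn ha huc)
  have key := tendsto_nhds_unique t1 (t2.congr' (by
    filter_upwards [self_mem_nhdsWithin] with η hη'
    have hη0 : 0 < η := hη'
    simp only [Function.comp_apply]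
    exact (green_split hn ha (pow_pos hη0 2) hu2 huc heq).symm))
  have hV : ((volume (ball (0 : En n) 1))⁻¹).toReal * volume.real (ball (0 : En n) 1) = 1 := by
    rw [ENNReal.toReal_inv, Measure.real]
    exact inv_mul_cancel₀ (ENNReal.toReal_pos (vol_ball_pos n).ne' (vol_ball_lt n).ne).ne'
  rw [PhInt_eq hn, GhInt_eq, key, smul_sub, smul_smul, hV, one_smul, sub_sub_cancel]

end

end HypGreen

/-- representation `u = P_h[φ] - G_h[ψ]` for solutions of `Δ_h u = ψ`. -/
theorem stmt_0 (n : ℕ) (hn : 3 ≤ n) (u ψ φ : En n → En n)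
    (hu2 : ContDiffOn ℝ 2 u (ball (0 : En n) 1))
    (huc : ContinuousOn u (closedBall (0 : En n) 1))
    (hψb : ∃ K : ℝ, ∀ x ∈ ball (0 : En n) 1, ‖ψ x‖ ≤ K)
    (hφb : ∃ K : ℝ, ∀ ξ ∈ sphere (0 : En n) 1, ‖φ ξ‖ ≤ K)
    (heq : ∀ x ∈ ball (0 : En n) 1, hypLap n u x = ψ x)
    (hbd : ∀ ξ ∈ sphere (0 : En n) 1, u ξ = φ ξ)
    (hint : ∫⁻ x in ball (0 : En n) 1,
        ENNReal.ofReal ((1 - ‖x‖ ^ 2) ^ (n - 1) * ‖ψ x‖) ∂(tauMeasure n) < ⊤) :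
    ∀ x ∈ ball (0 : En n) 1, u x = PhInt n φ x - GhInt n ψ x := by
  intro x hx
  have hPh : PhInt n φ x = PhInt n u x := by
    unfold PhInt
    simp only [fun ξ : sphere (0 : En n) 1 => hbd ξ ξ.2]
  rw [hPh]
  exact HypGreen.representation hn hu2 huc hψb heq hint (by simpa using hx)
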